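/- Let K be an algebraically closed field of characteristic zero and n ≥ 2. Every K-algebra automorphism of K[x^n, x^{n−1}y, …, x y^{n−1}, y^n] of finite order is linearizable: if f is an automorphism with f^m = id for some m ≥ 1, then there exists an automorphism φ of K[x^n, …, y^n] such that φ^{-1} ∘ f ∘ φ is the restriction to K[x^n, …, y^n] of a linear automorphism of K[x,y] (an element of GL_2(K)). -/

import Mathlib

open MvPolynomial

/-- A linear automorphism of `K[x,y]`: `(x,y) ↦ (ax+by, cx+dy)` with `ad - bc ≠ 0`. -/
def IsLinearAut (K : Type*) [Field K]
    (φ : MvPolynomial (Fin 2) K ≃ₐ[K] MvPolynomial (Fin 2) K) : Prop :=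
  ∃ a b c d : K, a * d - b * c ≠ 0 ∧
    φ (X 0) = C a * X 0 + C b * X 1 ∧ φ (X 1) = C c * X 0 + C d * X 1

/-- The Veronese subalgebra `K[xⁿ, xⁿ⁻¹y, …, xyⁿ⁻¹, yⁿ]` of `K[x,y]`. -/
noncomputable def veronese (K : Type*) [Field K] (n : ℕ) :
    Subalgebra K (MvPolynomial (Fin 2) K) :=
  Algebra.adjoin K {m | ∃ i ≤ n, m = X 0 ^ (n - i) * X 1 ^ i}

/-!
On `K[x^n, …, y^n]` an automorphism `f` satisfies `f(x^{n-i}y^i)^n = f(x^n)^{n-i} f(y^n)^i`, so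
factoriality of `K[x,y]` gives `f(x^{n-i}y^i) = h P^{n-i} Q^i`, where `h` turns out to be
constant. Absorbing an `n`-th root of `h`, `f` extends to an endomorphism `F` of `K[x,y]`, which
is an automorphism because an endomorphism fixing the Veronese algebra is a scaling. For the same
reason `F` has finite order and commutes with the scaling by a primitive `n`-th root of unity
`ζ ≠ 1`, whose fixed ring is the Veronese algebra. It remains to linearize `F` equivariantly.

Commuting with `ζ` excludes constant terms, so `F` is linear as soon as it has degree at most one.
Otherwise its degree is lowered by conjugating with equivariant elementary automorphisms. Let `p`,
`q` be the top-degree forms of `F⁻¹(x)`, `F⁻¹(y)`, of degrees `a ≤ b`. The `(a, b)`-weighted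
leading form `T` of `F(x)` or `F(y)`, if of weight greater than one, satisfies `T(p, q) = 0`,
hence vanishes at a point with nonzero coordinates, and it is killed by the leading part of the
locally nilpotent derivation `F ∘ ∂ ∘ F⁻¹`. Kernels of such derivations are factorially closed,
and this forces `T = e (y - c x^v)^k` with `b = v a` and `q = c p^v`. The elementary automorphism
that lowers the degree can be read off from these leading forms, and finiteness of the order
excludes the cases in which none does.
-/

section LeadingForms

open scoped Pointwise

variable {σ τ R M : Type*} [CommRing R] [AddCommGroup M]

/-- The polynomials all of whose monomials have a weight in `s`, where `X i` has weight `w i`. -/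
noncomputable def weightSupported (w : σ → M) (s : Set M) : Submodule R (MvPolynomial σ R) :=
  restrictSupport R (Finsupp.weight w ⁻¹' s)

/-- `p₀` is the part of weight `N` of `p`, and `p` has no monomial of weight greater than `N`.
The leading form `p₀` may vanish, so that every `p` of weight less than `N` is covered too. -/
def IsLeadingForm [LinearOrder M] (w : σ → M) (N : M) (p p₀ : MvPolynomial σ R) : Prop :=
  IsWeightedHomogeneous w p₀ N ∧ p - p₀ ∈ weightSupported w (Set.Iio N)

variable {w : σ → M} {w' : τ → M} {s t u : Set M} {N N' : M} {p p₀ q q₀ : MvPolynomial σ R}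

lemma mem_weightSupported :
    p ∈ weightSupported w s ↔ ∀ d, coeff d p ≠ 0 → Finsupp.weight w d ∈ s := by
  simp [weightSupported, mem_restrictSupport_iff, Set.subset_def]

lemma weightSupported_mono (h : s ⊆ t) :
    (weightSupported w s : Submodule R (MvPolynomial σ R)) ≤ weightSupported w t :=
  restrictSupport_mono R (Set.preimage_mono h)

lemma monomial_mem_weightSupported {d : σ →₀ ℕ} (r : R) (h : Finsupp.weight w d ∈ s) :
    monomial d r ∈ weightSupported w s :=
  (monomial_mem_restrictSupport R).2 (.inl h)

lemma X_mem_weightSupported {i : σ} (h : w i ∈ s) :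
    (X i : MvPolynomial σ R) ∈ weightSupported w s :=
  monomial_mem_weightSupported 1 (by simpa [Finsupp.weight_single] using h)

lemma C_mul_mem_weightSupported (r : R) (hp : p ∈ weightSupported w s) :
    C r * p ∈ weightSupported w s := by
  rw [C_mul']
  exact Submodule.smul_mem _ _ hp

lemma mul_mem_weightSupported (h : s + t ⊆ u) (hp : p ∈ weightSupported w s)
    (hq : q ∈ weightSupported w t) : p * q ∈ weightSupported w u := by
  refine restrictSupport_mono R ?_ ((restrictSupport_add R _ _).ge (Submodule.mul_mem_mul hp hq))
  rintro _ ⟨d, hd, e, he, rfl⟩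
  exact h ((map_add (Finsupp.weight w) d e).symm ▸ Set.add_mem_add hd he)

lemma pderiv_mem_weightSupported (i : σ) (h : ∀ x ∈ s, x - w i ∈ t)
    (hp : p ∈ weightSupported w s) : pderiv i p ∈ weightSupported w t := by
  rw [p.as_sum, map_sum]
  refine sum_mem fun d hd => ?_
  rw [pderiv_monomial]
  rcases Nat.eq_zero_or_pos (d i) with h0 | h0
  · simp [h0]
  refine monomial_mem_weightSupported _ ?_
  have hd' : d - Finsupp.single i 1 + Finsupp.single i 1 = d :=
    tsub_add_cancel_of_le (Finsupp.single_le_iff.2 h0)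
  have hw := congrArg (Finsupp.weight w) hd'
  rw [map_add, Finsupp.weight_single, one_smul] at hw
  rw [eq_sub_of_add_eq hw]
  exact h _ (mem_weightSupported.1 hp d (mem_support_iff.1 hd))

lemma isWeightedHomogeneous_iff_mem_weightSupported :
    IsWeightedHomogeneous w p N ↔ p ∈ weightSupported w {N} := by
  simp [IsWeightedHomogeneous, mem_weightSupported]

lemma eq_zero_of_mem_weightSupported (h : Disjoint s t) (hs : p ∈ weightSupported w s)
    (ht : p ∈ weightSupported w t) : p = 0 := by
  ext d
  by_contra hd
  exact Set.disjoint_left.1 h (mem_weightSupported.1 hs d hd) (mem_weightSupported.1 ht d hd)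

variable [LinearOrder M]

lemma exists_isLeadingForm (hp : p ∈ weightSupported w (Set.Iic N)) :
    ∃ p₀, IsLeadingForm w N p p₀ := by
  classical
  refine ⟨weightedHomogeneousComponent w N p,
    weightedHomogeneousComponent_isWeightedHomogeneous N p, mem_weightSupported.2 fun d hd => ?_⟩
  rw [coeff_sub, coeff_weightedHomogeneousComponent] at hd
  split_ifs at hd with hN
  · simp at hd
  · exact lt_of_le_of_ne (mem_weightSupported.1 hp d (by simpa using hd)) hN

namespace IsLeadingForm

lemma of_isWeightedHomogeneous (h : IsWeightedHomogeneous w p N) : IsLeadingForm w N p p :=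
  ⟨h, by simp⟩

lemma of_X (w : σ → M) (i : σ) : IsLeadingForm w (w i) (X i : MvPolynomial σ R) (X i) :=
  of_isWeightedHomogeneous (isWeightedHomogeneous_X R w i)

lemma of_lt (h : p ∈ weightSupported w (Set.Iio N)) : IsLeadingForm w N p 0 :=
  ⟨isWeightedHomogeneous_zero R w N, by simpa⟩

lemma lt_of_zero (h : IsLeadingForm w N p 0) : p ∈ weightSupported w (Set.Iio N) := by
  simpa using h.2

lemma le (h : IsLeadingForm w N p p₀) : p ∈ weightSupported w (Set.Iic N) := by
  have h₀ := weightSupported_mono (Set.singleton_subset_iff.2 (Set.mem_Iic.2 le_rfl))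
    (isWeightedHomogeneous_iff_mem_weightSupported.1 h.1)
  simpa using add_mem h₀ (weightSupported_mono Set.Iio_subset_Iic_self h.2)

lemma add (hp : IsLeadingForm w N p p₀) (hq : IsLeadingForm w N q q₀) :
    IsLeadingForm w N (p + q) (p₀ + q₀) :=
  ⟨hp.1.add hq.1, by simpa only [add_sub_add_comm] using add_mem hp.2 hq.2⟩

lemma sub (hp : IsLeadingForm w N p p₀) (hq : IsLeadingForm w N q q₀) :
    IsLeadingForm w N (p - q) (p₀ - q₀) :=
  ⟨hp.1.sub hq.1, by simpa only [sub_sub_sub_comm] using sub_mem hp.2 hq.2⟩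

lemma sum {ι : Type*} (S : Finset ι) {f g : ι → MvPolynomial σ R}
    (h : ∀ i ∈ S, IsLeadingForm w N (f i) (g i)) :
    IsLeadingForm w N (∑ i ∈ S, f i) (∑ i ∈ S, g i) :=
  ⟨.sum S g N fun i hi => (h i hi).1, by
    simpa only [Finset.sum_sub_distrib] using sum_mem fun i hi => (h i hi).2⟩

lemma C_mul (r : R) (h : IsLeadingForm w N p p₀) : IsLeadingForm w N (C r * p) (C r * p₀) :=
  ⟨h.1.C_mul r, by simpa only [mul_sub] using C_mul_mem_weightSupported r h.2⟩

lemma coeff_ne_zero (h : IsLeadingForm w N p p₀) {d : σ →₀ ℕ} (hd : coeff d p₀ ≠ 0) :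
    coeff d p ≠ 0 := fun hp =>
  (mem_weightSupported.1 h.2 d (by simpa [hp])).ne (h.1 hd)

lemma eq_zero (h : IsLeadingForm w N p p₀) (hp : p ∈ weightSupported w (Set.Iio N)) :
    p₀ = 0 :=
  eq_zero_of_mem_weightSupported (s := {N}) (t := Set.Iio N) (by simp)
    (isWeightedHomogeneous_iff_mem_weightSupported.1 h.1) (by simpa using sub_mem hp h.2)

lemma unique (hp : IsLeadingForm w N p p₀) (hq : IsLeadingForm w N p q₀) : p₀ = q₀ :=
  sub_eq_zero.1 ((hp.sub hq).eq_zero (by simp))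

lemma le_of_mem (h : IsLeadingForm w N p p₀) (h₀ : p₀ ≠ 0)
    (hp : p ∈ weightSupported w (Set.Iic N')) : N ≤ N' := by
  by_contra! hlt
  exact h₀ (h.eq_zero (weightSupported_mono (Set.Iic_subset_Iio.2 hlt) hp))

lemma weight_unique (hp : IsLeadingForm w N p p₀) (h₀ : p₀ ≠ 0) (hq : IsLeadingForm w N' p q₀)
    (h₀' : q₀ ≠ 0) : N = N' :=
  le_antisymm (hp.le_of_mem h₀ hq.le) (hq.le_of_mem h₀' hp.le)

variable [IsOrderedAddMonoid M]

lemma pderiv (i : σ) (h : IsLeadingForm w N p p₀) :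
    IsLeadingForm w (N - w i) (pderiv i p) (pderiv i p₀) := by
  refine ⟨isWeightedHomogeneous_iff_mem_weightSupported.2 (pderiv_mem_weightSupported i (by simp)
    (isWeightedHomogeneous_iff_mem_weightSupported.1 h.1)), ?_⟩
  rw [← map_sub]
  exact pderiv_mem_weightSupported i (by simp) h.2

lemma mul (hp : IsLeadingForm w N p p₀) (hq : IsLeadingForm w N' q q₀) :
    IsLeadingForm w (N + N') (p * q) (p₀ * q₀) := by
  refine ⟨hp.1.mul hq.1, ?_⟩
  rw [show p * q - p₀ * q₀ = (p - p₀) * q + p₀ * (q - q₀) by ring]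
  refine add_mem (mul_mem_weightSupported (Set.Iio_add_Iic_subset N N') hp.2 hq.le)
    (mul_mem_weightSupported ?_ (isWeightedHomogeneous_iff_mem_weightSupported.1 hp.1) hq.2)
  simp [add_comm]

lemma pow (h : IsLeadingForm w N p p₀) (k : ℕ) : IsLeadingForm w (k • N) (p ^ k) (p₀ ^ k) := by
  induction k with
  | zero => simpa using of_isWeightedHomogeneous (isWeightedHomogeneous_one R w)
  | succ k ih => simpa only [pow_succ, succ_nsmul] using ih.mul h

lemma prod {ι : Type*} (S : Finset ι) {f g : ι → MvPolynomial σ R} {n : ι → M}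
    (h : ∀ i ∈ S, IsLeadingForm w (n i) (f i) (g i)) :
    IsLeadingForm w (∑ i ∈ S, n i) (∏ i ∈ S, f i) (∏ i ∈ S, g i) := by
  classical
  induction S using Finset.induction_on with
  | empty => simpa using of_isWeightedHomogeneous (isWeightedHomogeneous_one R w)
  | insert i S hi ih =>
    simp only [Finset.sum_insert hi, Finset.prod_insert hi]
    exact (h i (Finset.mem_insert_self i S)).mul
      (ih fun j hj => h j (Finset.mem_insert_of_mem hj))

lemma aeval_monomial {P P₀ : σ → MvPolynomial τ R}
    (hP : ∀ i, IsLeadingForm w' (w i) (P i) (P₀ i)) (d : σ →₀ ℕ) (r : R) :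
    IsLeadingForm w' (Finsupp.weight w d) (aeval P (monomial d r)) (aeval P₀ (monomial d r)) := by
  rw [MvPolynomial.aeval_monomial, MvPolynomial.aeval_monomial, Finsupp.weight_apply]
  exact (prod _ fun i _ => (hP i).pow (d i)).C_mul r

lemma aeval {P P₀ : σ → MvPolynomial τ R} (hp : IsLeadingForm w N p p₀)
    (hP : ∀ i, IsLeadingForm w' (w i) (P i) (P₀ i)) :
    IsLeadingForm w' N (aeval P p) (aeval P₀ p₀) := by
  have h₁ : IsLeadingForm w' N (MvPolynomial.aeval P (p - p₀)) 0 := by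
    refine of_lt ?_
    rw [(p - p₀).as_sum, map_sum]
    refine sum_mem fun d hd => weightSupported_mono (Set.Iic_subset_Iio.2 ?_)
      (aeval_monomial hP d _).le
    exact mem_weightSupported.1 hp.2 d (mem_support_iff.1 hd)
  have h₂ : IsLeadingForm w' N (MvPolynomial.aeval P p₀) (MvPolynomial.aeval P₀ p₀) := by
    rw [p₀.as_sum, map_sum, map_sum]
    exact sum _ fun d hd => hp.1 (mem_support_iff.1 hd) ▸ aeval_monomial hP d _
  simpa using h₁.add h₂

end IsLeadingForm

lemma exists_isLeadingForm_ne_zero (w : σ → M) (hp : p ≠ 0) :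
    ∃ N p₀, p₀ ≠ 0 ∧ IsLeadingForm w N p p₀ ∧ ∃ d, coeff d p ≠ 0 ∧ Finsupp.weight w d = N := by
  obtain ⟨d, hd, hmax⟩ := p.support.exists_max_image (Finsupp.weight w) (by simpa using hp)
  rw [mem_support_iff] at hd
  obtain ⟨p₀, h⟩ := exists_isLeadingForm (N := Finsupp.weight w d) <| mem_weightSupported.2
    fun e he => hmax e (mem_support_iff.2 he)
  refine ⟨_, p₀, ?_, h, d, hd, rfl⟩
  rintro rfl
  exact lt_irrefl _ (mem_weightSupported.1 h.lt_of_zero d hd)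

variable [IsOrderedAddMonoid M]

lemma aeval_mem_weightSupported_Iic {P : σ → MvPolynomial τ R}
    (hp : p ∈ weightSupported w (Set.Iic N))
    (hP : ∀ i, P i ∈ weightSupported w' (Set.Iic (w i))) :
    aeval P p ∈ weightSupported w' (Set.Iic N) := by
  obtain ⟨p₀, h₀⟩ := exists_isLeadingForm hp
  choose P₀ hP₀ using fun i => exists_isLeadingForm (hP i)
  exact (h₀.aeval hP₀).le

lemma aeval_mem_weightSupported_Iio {P : σ → MvPolynomial τ R}
    (hp : p ∈ weightSupported w (Set.Iio N))
    (hP : ∀ i, P i ∈ weightSupported w' (Set.Iic (w i))) :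
    aeval P p ∈ weightSupported w' (Set.Iio N) := by
  choose P₀ hP₀ using fun i => exists_isLeadingForm (hP i)
  exact IsLeadingForm.lt_of_zero (by simpa using (IsLeadingForm.of_lt hp).aeval hP₀)

end LeadingForms

section ChangeOfWeights

variable {σ R M : Type*} [CommRing R] [AddCommGroup M] {w w' : σ → M} {s : Set M} {N : M}
  {p p₀ : MvPolynomial σ R}

lemma weight_nsmul (k : ℕ) (w : σ → M) (d : σ →₀ ℕ) :
    Finsupp.weight (k • w) d = k • Finsupp.weight w d := by
  simp only [Finsupp.weight_apply, Finsupp.smul_sum, Pi.smul_apply, smul_comm k]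

variable [LinearOrder M] [IsOrderedAddMonoid M]

lemma weightSupported_le_of_le (hs : IsLowerSet s) (h : w ≤ w') :
    (weightSupported w' s : Submodule R (MvPolynomial σ R)) ≤ weightSupported w s := by
  refine restrictSupport_mono R fun d hd => hs ?_ hd
  simp only [Finsupp.weight_apply]
  exact Finset.sum_le_sum fun i _ => nsmul_le_nsmul_right (h i) (d i)

lemma isLeadingForm_nsmul_iff {k : ℕ} (hk : 0 < k) :
    IsLeadingForm (k • w) (k • N) p p₀ ↔ IsLeadingForm w N p p₀ := by
  have hmono : StrictMono fun x : M => k • x := nsmul_right_strictMono hk.ne'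
  simp only [IsLeadingForm, IsWeightedHomogeneous, mem_weightSupported, weight_nsmul, Set.mem_Iio,
    hmono.injective.eq_iff, hmono.lt_iff_lt]

end ChangeOfWeights

section TotalDegree

variable {σ R : Type*} [CommRing R] {D : ℕ} {p p₀ : MvPolynomial σ R}

lemma weight_one_eq_degree (d : σ →₀ ℕ) : Finsupp.weight (1 : σ → ℤ) d = d.degree := by
  simp [Finsupp.weight_apply, Finsupp.degree_apply, Finsupp.sum]

lemma mem_weightSupported_one_Iic :
    p ∈ weightSupported (1 : σ → ℤ) (Set.Iic (D : ℤ)) ↔ p.totalDegree ≤ D := by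
  simp only [mem_weightSupported, weight_one_eq_degree, Set.mem_Iic, Nat.cast_le, totalDegree,
    Finset.sup_le_iff, mem_support_iff]
  rfl

lemma totalDegree_lt_of_mem_weightSupported (hD : 0 < D)
    (h : p ∈ weightSupported (1 : σ → ℤ) (Set.Iio (D : ℤ))) : p.totalDegree < D := by
  refine Nat.lt_of_le_sub_one hD (mem_weightSupported_one_Iic.1 (weightSupported_mono ?_ h))
  intro x hx
  simp only [Set.mem_Iio, Set.mem_Iic] at hx ⊢
  lia

lemma IsLeadingForm.totalDegree_eq (h : IsLeadingForm (1 : σ → ℤ) (D : ℤ) p p₀) (h₀ : p₀ ≠ 0) :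
    p.totalDegree = D :=
  le_antisymm (mem_weightSupported_one_Iic.1 h.le) <| by
    exact_mod_cast h.le_of_mem h₀ (mem_weightSupported_one_Iic.2 le_rfl)

lemma exists_isLeadingForm_totalDegree (hp : p ≠ 0) :
    ∃ p₀, p₀ ≠ 0 ∧ IsLeadingForm (1 : σ → ℤ) p.totalDegree p p₀ := by
  obtain ⟨N, p₀, hp₀, h, d, -, rfl⟩ := exists_isLeadingForm_ne_zero (1 : σ → ℤ) hp
  rw [weight_one_eq_degree] at h
  exact ⟨p₀, hp₀, by rwa [h.totalDegree_eq hp₀]⟩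

end TotalDegree

section LocallyNilpotentDerivations

variable {R A B : Type*} [CommRing R] [CommRing A] [Algebra R A] [CommRing B] [Algebra R B]

/-- The derivation `D` is locally nilpotent: every element is killed by some iterate of `D`. -/
def IsLocallyNilpotent (D : Derivation R A A) : Prop :=
  ∀ g, ∃ k : ℕ, D^[k] g = 0

/-- The degree of a nonzero `g` with respect to a locally nilpotent derivation `D`: the last `k`
for which `D^[k] g` is nonzero. -/
def HasDerivationDegree (D : Derivation R A A) (g : A) (k : ℕ) : Prop :=
  D^[k] g ≠ 0 ∧ D^[k + 1] g = 0

variable {D : Derivation R A A} {g h : A} {k l : ℕ}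

lemma derivation_iterate_eq_zero_of_le (hkl : k ≤ l) (hk : D^[k] g = 0) : D^[l] g = 0 := by
  obtain ⟨t, rfl⟩ := Nat.exists_eq_add_of_le hkl
  rw [add_comm, Function.iterate_add_apply, hk]
  exact iterate_map_zero D t

lemma derivation_iterate_mul (n : ℕ) (g h : A) :
    D^[n] (g * h) =
      ∑ ij ∈ Finset.HasAntidiagonal.antidiagonal n, n.choose ij.1 • (D^[ij.1] g * D^[ij.2] h) := by
  induction n with
  | zero => simp
  | succ n ih =>
    rw [Finset.sum_antidiagonal_choose_succ_nsmul (fun i j => D^[i] g * D^[j] h) n]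
    simp only [Function.iterate_succ_apply', ih, map_sum, map_nsmul, Derivation.leibniz, smul_add,
      Finset.sum_add_distrib, smul_eq_mul]
    congr 1
    refine Finset.sum_congr rfl fun ij hij => ?_
    rw [mul_comm, n.choose_symm_of_eq_add (Finset.HasAntidiagonal.mem_antidiagonal.1 hij).symm]

namespace IsLocallyNilpotent

lemma exists_hasDerivationDegree (hD : IsLocallyNilpotent D) (hg : g ≠ 0) :
    ∃ k, HasDerivationDegree D g k := by
  classical
  have hspec := Nat.find_spec (hD g)
  obtain ⟨k, hk⟩ := Nat.exists_eq_succ_of_ne_zero (n := Nat.find (hD g)) fun h0 =>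
    hg (by simpa [h0] using hspec)
  exact ⟨k, Nat.find_min (hD g) (by lia), by simpa [hk] using hspec⟩

end IsLocallyNilpotent

namespace HasDerivationDegree

lemma unique (hk : HasDerivationDegree D g k) (hl : HasDerivationDegree D g l) : k = l := by
  rcases lt_trichotomy k l with h | h | h
  · exact absurd (derivation_iterate_eq_zero_of_le h hk.2) hl.1
  · exact h
  · exact absurd (derivation_iterate_eq_zero_of_le h hl.2) hk.1

lemma of_mem_ker (hg : g ≠ 0) (h : D g = 0) : HasDerivationDegree D g 0 := ⟨by simpa, by simpa⟩

lemma apply (h : HasDerivationDegree D g (k + 1)) : HasDerivationDegree D (D g) k := h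

lemma mul [IsDomain A] [CharZero A] (hg : HasDerivationDegree D g k)
    (hh : HasDerivationDegree D h l) : HasDerivationDegree D (g * h) (k + l) := by
  have vanish {i j : ℕ} (hij : k < i ∨ l < j) : D^[i] g * D^[j] h = 0 := by
    rcases hij with hi | hj
    · rw [derivation_iterate_eq_zero_of_le hi hg.2, zero_mul]
    · rw [derivation_iterate_eq_zero_of_le hj hh.2, mul_zero]
  constructor
  · rw [derivation_iterate_mul, Finset.sum_eq_single (k, l)]
    · have := (Nat.choose_pos (Nat.le_add_right k l)).ne'
      simpa [hg.1, hh.1] using this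
    · rintro ⟨i, j⟩ hij hne
      rw [Finset.HasAntidiagonal.mem_antidiagonal] at hij
      rw [vanish (by grind), smul_zero]
    · simp
  · rw [derivation_iterate_mul]
    refine Finset.sum_eq_zero fun ij hij => ?_
    rw [Finset.HasAntidiagonal.mem_antidiagonal] at hij
    rw [vanish (by lia), smul_zero]

lemma lt_of_dvd [IsDomain A] [CharZero A] (hD : IsLocallyNilpotent D)
    (hg : HasDerivationDegree D g k) (hh : HasDerivationDegree D h l) (h0 : D g ≠ 0)
    (hdvd : h ∣ D g) : l < k := by
  obtain ⟨k, rfl⟩ := Nat.exists_eq_succ_of_ne_zero (n := k) fun hk => h0 (by simpa [hk] using hg.2)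
  obtain ⟨s, hs⟩ := hdvd
  obtain ⟨j, hj⟩ := hD.exists_hasDerivationDegree (right_ne_zero_of_mul (hs ▸ h0))
  have := (hh.mul hj).unique (hs ▸ hg.apply)
  lia

end HasDerivationDegree

/-- The conjugate `F ∘ D ∘ F⁻¹` of a derivation `D` by an algebra isomorphism `F`. -/
def derivationConj (F : A ≃ₐ[R] B) (D : Derivation R A A) : Derivation R B B :=
  Derivation.mk' (F.toLinearMap ∘ₗ D.toLinearMap ∘ₗ F.symm.toLinearMap) fun a b => by simp

lemma derivationConj_apply (F : A ≃ₐ[R] B) (D : Derivation R A A) (b : B) :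
    derivationConj F D b = F (D (F.symm b)) := rfl

namespace IsLocallyNilpotent

lemma apply_eq_zero_of_mul [IsDomain A] [CharZero A] (hD : IsLocallyNilpotent D)
    (h0 : g * h ≠ 0) (hgh : D (g * h) = 0) : D g = 0 ∧ D h = 0 := by
  obtain ⟨k, hk⟩ := hD.exists_hasDerivationDegree (left_ne_zero_of_mul h0)
  obtain ⟨l, hl⟩ := hD.exists_hasDerivationDegree (right_ne_zero_of_mul h0)
  have hkl := (hk.mul hl).unique (.of_mem_ker h0 hgh)
  obtain ⟨rfl, rfl⟩ : k = 0 ∧ l = 0 := by lia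
  exact ⟨hk.2, hl.2⟩

lemma apply_eq_zero_of_dvd [IsDomain A] [CharZero A] (hD : IsLocallyNilpotent D)
    (h0 : h ≠ 0) (hh : D h = 0) (hdvd : g ∣ h) : D g = 0 := by
  obtain ⟨s, rfl⟩ := hdvd
  exact (hD.apply_eq_zero_of_mul h0 hh).1

lemma eq_of_dvd_sub [IsDomain A] [CharZero A] (hD : IsLocallyNilpotent D) {e : A} (he : D e ≠ 0)
    (hg : D g = 0) (hh : D h = 0) (hdvd : e ∣ g - h) : g = h := by
  by_contra hne
  exact he (hD.apply_eq_zero_of_dvd (sub_ne_zero.2 hne) (by rw [map_sub, hg, hh, sub_zero]) hdvd)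

lemma conj (hD : IsLocallyNilpotent D) (F : A ≃ₐ[R] B) :
    IsLocallyNilpotent (derivationConj F D) := by
  intro g
  obtain ⟨k, hk⟩ := hD (F.symm g)
  have hiter : Function.Semiconj F D (derivationConj F D) := fun a => by
    simp [derivationConj_apply]
  refine ⟨k, ?_⟩
  rw [← F.apply_symm_apply g, ← (hiter.iterate_right k).eq, hk, map_zero]

end IsLocallyNilpotent

end LocallyNilpotentDerivations

section LeadingDerivation

variable {σ R M : Type*} [CommRing R] [AddCommGroup M]

lemma isLocallyNilpotent_of_monomial {D : Derivation R (MvPolynomial σ R) (MvPolynomial σ R)}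
    (hD : ∀ d r, ∃ k : ℕ, D^[k] (monomial d r) = 0) : IsLocallyNilpotent D := by
  intro g
  induction g using MvPolynomial.monomial_add_induction_on with
  | C a => exact hD 0 a
  | monomial_add d r g _ _ ih =>
    obtain ⟨k, hk⟩ := ih
    obtain ⟨l, hl⟩ := hD d r
    exact ⟨k + l, by rw [iterate_map_add, derivation_iterate_eq_zero_of_le (by lia) hk,
      derivation_iterate_eq_zero_of_le (by lia) hl, add_zero]⟩

lemma isLocallyNilpotent_pderiv (i : σ) :
    IsLocallyNilpotent (pderiv i : Derivation R (MvPolynomial σ R) _) := by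
  suffices ∀ (t : ℕ) (d : σ →₀ ℕ) (r : R), d i < t → (pderiv i)^[t] (monomial d r) = 0 from
    isLocallyNilpotent_of_monomial fun d r => ⟨d i + 1, this _ d r (Nat.lt_succ_self _)⟩
  intro t
  induction t with
  | zero => lia
  | succ t ih =>
    intro d r hd
    rw [Function.iterate_succ_apply, pderiv_monomial]
    rcases Nat.eq_zero_or_pos (d i) with h0 | h0
    · simp [h0]
    · exact ih _ _ (by simp; lia)

lemma derivation_eq_sum_pderiv [Fintype σ]
    (D : Derivation R (MvPolynomial σ R) (MvPolynomial σ R)) (g : MvPolynomial σ R) :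
    D g = ∑ i, pderiv i g * D (X i) := by
  classical
  have sum_apply (p : MvPolynomial σ R) :
      (∑ i, D (X i) • pderiv i : Derivation R (MvPolynomial σ R) _) p =
        ∑ i, pderiv i p * D (X i) := by
    rw [← Derivation.coeFnAddMonoidHom_apply, map_sum, Finset.sum_apply]
    simp [mul_comm]
  rw [← sum_apply]
  refine DFunLike.congr_fun (derivation_ext fun j => ?_) g
  simp [sum_apply, pderiv_X, Pi.single_apply]

lemma exists_apply_X_ne_zero {D : Derivation R (MvPolynomial σ R) (MvPolynomial σ R)}
    (h0 : D ≠ 0) : ∃ i, D (X i) ≠ 0 := by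
  by_contra! h
  exact h0 (derivation_ext fun i => by simpa using h i)

variable [LinearOrder M]

/-- `d` is homogeneous of weight `δ` and takes every leading form to the corresponding leading
form of the image under `D`. -/
def IsLeadingDerivation (w : σ → M) (δ : M)
    (D d : Derivation R (MvPolynomial σ R) (MvPolynomial σ R)) : Prop :=
  ∀ ⦃N g g₀⦄, IsLeadingForm w N g g₀ → IsLeadingForm w (N + δ) (D g) (d g₀)

variable {w : σ → M} {δ : M} {D d : Derivation R (MvPolynomial σ R) (MvPolynomial σ R)}

lemma isLeadingDerivation_of_X [IsOrderedAddMonoid M] [Finite σ]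
    (h : ∀ i, IsLeadingForm w (w i + δ) (D (X i)) (d (X i))) : IsLeadingDerivation w δ D d := by
  have := Fintype.ofFinite σ
  intro N g g₀ hg
  rw [derivation_eq_sum_pderiv D, derivation_eq_sum_pderiv d]
  exact .sum _ fun i _ => by
    simpa only [← add_assoc, sub_add_cancel] using (hg.pderiv i).mul (h i)

lemma IsLeadingDerivation.isLocallyNilpotent (h : IsLeadingDerivation w δ D d)
    (hD : IsLocallyNilpotent D) : IsLocallyNilpotent d := by
  refine isLocallyNilpotent_of_monomial fun e r => ?_
  obtain ⟨k, hk⟩ := hD (monomial e r)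
  have hlead : ∀ k : ℕ, IsLeadingForm w (Finsupp.weight w e + k • δ)
      (D^[k] (monomial e r)) (d^[k] (monomial e r)) := by
    intro k
    induction k with
    | zero =>
      simpa using IsLeadingForm.of_isWeightedHomogeneous (isWeightedHomogeneous_monomial w e r rfl)
    | succ k ih =>
      simpa only [Function.iterate_succ_apply', succ_nsmul, add_assoc] using h ih
  exact ⟨k, (hlead k).eq_zero (by simp [hk])⟩

lemma exists_isLeadingDerivation [IsOrderedAddMonoid M] [Finite σ] (w : σ → M)
    (hD : IsLocallyNilpotent D) (h0 : D ≠ 0) :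
    ∃ δ d, d ≠ 0 ∧ IsLocallyNilpotent d ∧ IsLeadingDerivation w δ D d := by
  choose N p hp hN _ using fun i : {i // D (X i) ≠ 0} => exists_isLeadingForm_ne_zero w i.2
  obtain ⟨j, hj⟩ := exists_apply_X_ne_zero h0
  have : Nonempty {i // D (X i) ≠ 0} := ⟨⟨j, hj⟩⟩
  obtain ⟨k, hk⟩ := Finite.exists_max fun i => N i - w i
  have hle : ∀ i, D (X i) ∈ weightSupported w (Set.Iic (w i + (N k - w k))) := fun i => by
    by_cases hi : D (X i) = 0
    · simp [hi]
    · exact weightSupported_mono (Set.Iic_subset_Iic.2 (sub_le_iff_le_add'.1 (hk ⟨i, hi⟩)))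
        (hN ⟨i, hi⟩).le
  choose q hq using fun i => exists_isLeadingForm (hle i)
  have hd : IsLeadingDerivation w (N k - w k) D (mkDerivation R q) :=
    isLeadingDerivation_of_X fun i => by simpa only [mkDerivation_X] using hq i
  refine ⟨_, _, fun h => hp k ?_, hd.isLocallyNilpotent hD, hd⟩
  rw [(hN k).unique (by simpa only [add_sub_cancel] using hq k), ← mkDerivation_X R q, h,
    Derivation.zero_apply]

end LeadingDerivation

section BinaryKernel

lemma weight_fin_two {M : Type*} [AddCommMonoid M] (w : Fin 2 → M) (d : Fin 2 →₀ ℕ) :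
    Finsupp.weight w d = d 0 • w 0 + d 1 • w 1 := by
  simp [Finsupp.weight_apply, Finsupp.sum_fintype]

lemma finsupp_fin_two_ext {d e : Fin 2 →₀ ℕ} (h0 : d 0 = e 0) (h1 : d 1 = e 1) : d = e :=
  Finsupp.ext (Fin.forall_fin_two.2 ⟨h0, h1⟩)

lemma X_dvd_iff_forall_coeff {σ R : Type*} [CommSemiring R] {i : σ} {p : MvPolynomial σ R} :
    X i ∣ p ↔ ∀ d, coeff d p ≠ 0 → d i ≠ 0 := by
  simpa [Ideal.mem_span_singleton] using mem_ideal_span_X_image (x := p) (s := {i})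

lemma X_dvd_of_dvd_C_mul_X_pow_mul {σ R : Type*} [CommRing R] [IsDomain R] {i j : σ} {r : R}
    {n : ℕ} {p : MvPolynomial σ R} (hij : i ≠ j) (hr : r ≠ 0) (h : X i ∣ C r * X j ^ n * p) :
    X i ∣ p := by
  have hX : Prime (X i : MvPolynomial σ R) := X_prime
  rcases hX.dvd_or_dvd h with h | h
  · rcases hX.dvd_or_dvd h with h | h
    · rw [C_apply, X_dvd_monomial] at h
      simp [hr] at h
    · exact absurd (X_dvd_X.1 (hX.dvd_of_dvd_pow h)) hij
  · exact h

variable {K : Type*} [Field K] {a b N : ℕ} {r : MvPolynomial (Fin 2) K}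

lemma X_pow_sub_dvd_monomial_sub (ha : 0 < a) (hab : a.Coprime b) (c : K) {d e : Fin 2 →₀ ℕ}
    (hw : Finsupp.weight ![a, b] d = Finsupp.weight ![a, b] e) (he : e 1 ≤ d 1) :
    ∃ s : K, (X 1 ^ a - C c * X 0 ^ b) ∣ monomial d 1 - C s * monomial e 1 := by
  obtain ⟨t, ht⟩ := Nat.exists_eq_add_of_le he
  have h0 : a * e 0 = a * d 0 + b * t := by
    simp [weight_fin_two, ht] at hw
    linarith
  obtain ⟨k, rfl⟩ : a ∣ t := hab.dvd_of_dvd_mul_left <| by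
    rw [← Nat.dvd_add_right (dvd_mul_right a (d 0)), ← h0]
    exact dvd_mul_right _ _
  have h0' : e 0 = d 0 + b * k := Nat.eq_of_mul_eq_mul_left ha (by rw [h0]; ring)
  refine ⟨c ^ k, ?_⟩
  have hsub : monomial d 1 - C (c ^ k) * monomial e 1 =
      X 0 ^ d 0 * X 1 ^ e 1 * ((X 1 ^ a) ^ k - (C c * X 0 ^ b) ^ k) := by
    rw [monomial_fin_two, monomial_fin_two, ht, h0']
    simp only [map_one, map_pow]
    ring
  rw [hsub]
  exact (sub_dvd_pow_sub_pow _ _ k).mul_left _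

lemma X_pow_sub_dvd_of_eval_eq_zero (ha : 0 < a) (hab : a.Coprime b)
    (hr : IsWeightedHomogeneous ![a, b] r N) {α β : K} (hα : α ≠ 0) (hβ : β ≠ 0)
    (hroot : eval ![α, β] r = 0) : (X 1 ^ a - C (β ^ a / α ^ b) * X 0 ^ b) ∣ r := by
  rcases eq_or_ne r 0 with rfl | hr0
  · exact dvd_zero _
  set u : MvPolynomial (Fin 2) K := X 1 ^ a - C (β ^ a / α ^ b) * X 0 ^ b with hu
  obtain ⟨e, he, hmin⟩ := r.support.exists_min_image (fun d => d 1) (by simpa using hr0)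
  have key : ∀ d ∈ r.support, ∃ s, u ∣ monomial d (coeff d r) - C s * monomial e 1 := by
    intro d hd
    obtain ⟨s, hs⟩ := X_pow_sub_dvd_monomial_sub ha hab (β ^ a / α ^ b)
      ((hr (mem_support_iff.1 hd)).trans (hr (mem_support_iff.1 he)).symm) (hmin d hd)
    refine ⟨coeff d r * s, ?_⟩
    have := hs.mul_left (C (coeff d r))
    rwa [mul_sub, C_mul_monomial, mul_one, ← mul_assoc, ← C_mul] at this
  choose! s hs using key
  obtain ⟨g, hg⟩ : u ∣ r - C (∑ d ∈ r.support, s d) * monomial e 1 := by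
    rw [map_sum, Finset.sum_mul]
    conv_rhs => enter [1]; rw [r.as_sum]
    rw [← Finset.sum_sub_distrib]
    exact Finset.dvd_sum hs
  have hu0 : eval ![α, β] u = 0 := by
    simp [hu, hα]
  have hsum : ∑ d ∈ r.support, s d = 0 := by
    simpa [hroot, hu0, monomial_fin_two, hα, hβ] using congrArg (eval ![α, β]) hg
  exact ⟨g, by simpa [hsum] using hg⟩

lemma X_zero_dvd_sub_C_mul_X_one_pow {l : ℕ} (hb : 0 < b)
    (hr : IsWeightedHomogeneous ![a, b] r (l * b)) :
    X 0 ∣ r - C (coeff (Finsupp.single 1 l) r) * X 1 ^ l := by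
  refine X_dvd_iff_forall_coeff.2 fun d hd h0 => ?_
  have hdl : d ≠ Finsupp.single 1 l := by
    rintro rfl
    simp [coeff_X_pow] at hd
  simp only [coeff_sub, coeff_C_mul, coeff_X_pow, if_neg hdl.symm, mul_zero, sub_zero] at hd
  have hw := hr hd
  simp only [weight_fin_two, h0, zero_mul, zero_add, smul_eq_mul, Matrix.cons_val_one,
    Matrix.cons_val_fin_one] at hw
  exact hdl (finsupp_fin_two_ext (by simpa using h0)
    (by simpa using Nat.eq_of_mul_eq_mul_right hb hw))

variable {c : K} {d : Derivation K (MvPolynomial (Fin 2) K) (MvPolynomial (Fin 2) K)}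

lemma derivation_X_pow_sub_eq_zero_iff :
    d (X 1 ^ a - C c * X 0 ^ b) = 0 ↔
      C (a : K) * X 1 ^ (a - 1) * d (X 1) = C (c * b) * X 0 ^ (b - 1) * d (X 0) := by
  rw [map_sub, sub_eq_zero, C_mul', Derivation.map_smul, Derivation.leibniz_pow,
    Derivation.leibniz_pow]
  simp only [smul_eq_mul, nsmul_eq_mul, map_mul, map_natCast, mul_assoc, smul_eq_C_mul]

variable [CharZero K]

lemma apply_X_ne_zero_of_X_pow_sub_mem_ker (hd : d ≠ 0) (ha : 0 < a) (hb : 0 < b) (hc : c ≠ 0)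
    (hu : d (X 1 ^ a - C c * X 0 ^ b) = 0) : d (X 0) ≠ 0 ∧ d (X 1) ≠ 0 := by
  rw [derivation_X_pow_sub_eq_zero_iff] at hu
  have h01 : d (X 0) = 0 ↔ d (X 1) = 0 := by
    constructor <;> intro h <;> simpa [h, ha.ne', hb.ne', hc] using hu
  obtain ⟨i, hi⟩ := exists_apply_X_ne_zero hd
  fin_cases i
  · exact ⟨hi, h01.not.1 hi⟩
  · exact ⟨h01.not.2 hi, hi⟩

lemma IsLocallyNilpotent.eq_one_or_eq_one_of_X_pow_sub_mem_ker (hLN : IsLocallyNilpotent d)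
    (hd : d ≠ 0) (ha : 0 < a) (hb : 0 < b) (hc : c ≠ 0)
    (hu : d (X 1 ^ a - C c * X 0 ^ b) = 0) : a = 1 ∨ b = 1 := by
  obtain ⟨hx, hy⟩ := apply_X_ne_zero_of_X_pow_sub_mem_ker hd ha hb hc hu
  rw [derivation_X_pow_sub_eq_zero_iff] at hu
  by_contra! h
  have hydx : X 1 ∣ d (X 0) := by
    refine X_dvd_of_dvd_C_mul_X_pow_mul (j := 0) (n := b - 1) one_ne_zero
      (mul_ne_zero hc (Nat.cast_ne_zero.2 hb.ne')) ?_
    rw [← hu]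
    exact ((dvd_pow_self _ (by lia)).mul_left _).mul_right _
  have hxdy : X 0 ∣ d (X 1) := by
    refine X_dvd_of_dvd_C_mul_X_pow_mul (j := 1) (n := a - 1) zero_ne_one
      (Nat.cast_ne_zero.2 ha.ne') ?_
    rw [hu]
    exact ((dvd_pow_self _ (by lia)).mul_left _).mul_right _
  obtain ⟨i, hi⟩ := hLN.exists_hasDerivationDegree (X_ne_zero (0 : Fin 2))
  obtain ⟨j, hj⟩ := hLN.exists_hasDerivationDegree (X_ne_zero (1 : Fin 2))
  exact lt_asymm (hi.lt_of_dvd hLN hj hx hydx) (hj.lt_of_dvd hLN hi hy hxdy)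

/-- The root on the torus provides an irreducible factor `X 1 ^ a - C c * X 0 ^ b` of `r`, which
lies in the kernel of `d` since kernels of locally nilpotent derivations are factorially closed. -/
lemma IsLocallyNilpotent.exists_eq_of_isWeightedHomogeneous_of_coprime
    (hLN : IsLocallyNilpotent d) (hd : d ≠ 0) (ha : 0 < a) (hab : a ≤ b) (hcop : a.Coprime b)
    (hr : IsWeightedHomogeneous ![a, b] r N) (hr0 : r ≠ 0) (hdr : d r = 0) {α β : K}
    (hα : α ≠ 0) (hβ : β ≠ 0) (hroot : eval ![α, β] r = 0) :
    a = 1 ∧ ∃ (c e : K) (k : ℕ), c ≠ 0 ∧ e ≠ 0 ∧ 0 < k ∧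
      r = C e * (X 1 - C c * X 0 ^ b) ^ k := by
  have hc : β ^ a / α ^ b ≠ 0 := div_ne_zero (pow_ne_zero _ hβ) (pow_ne_zero _ hα)
  have hu := hLN.apply_eq_zero_of_dvd hr0 hdr (X_pow_sub_dvd_of_eval_eq_zero ha hcop hr hα hβ hroot)
  obtain rfl : a = 1 := by
    have := hLN.eq_one_or_eq_one_of_X_pow_sub_mem_ker hd ha (by lia) hc hu
    lia
  obtain ⟨hx, -⟩ := apply_X_ne_zero_of_X_pow_sub_mem_ker hd ha hab hc hu
  rw [pow_one, pow_one] at *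
  obtain ⟨m, hm, hm0⟩ : ∃ m, coeff m r ≠ 0 ∧ m 0 = 0 := by
    by_contra! h
    exact hx (hLN.apply_eq_zero_of_dvd hr0 hdr (X_dvd_iff_forall_coeff.2 h))
  have hmk : Finsupp.single 1 (m 1) = m := finsupp_fin_two_ext (by simp [hm0]) (by simp)
  have hN : N = m 1 * b := by simpa [weight_fin_two, hm0] using (hr hm).symm
  have hxr := X_zero_dvd_sub_C_mul_X_one_pow hab (hN ▸ hr)
  rw [hmk] at hxr
  have hxu : (X 0 : MvPolynomial (Fin 2) K) ∣
      X 1 ^ m 1 - (X 1 - C (β / α ^ b) * X 0 ^ b) ^ m 1 := by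
    refine dvd_trans ?_ (sub_dvd_pow_sub_pow _ _ _)
    rw [sub_sub_cancel]
    exact (dvd_pow_self _ (by lia)).mul_left _
  have heq : r = C (coeff m r) * (X 1 - C (β / α ^ b) * X 0 ^ b) ^ m 1 := by
    refine hLN.eq_of_dvd_sub hx hdr ?_ ?_
    · rw [C_mul', Derivation.map_smul, Derivation.leibniz_pow, hu]
      simp
    · simpa [mul_sub] using hxr.add (hxu.mul_left (C (coeff m r)))
  refine ⟨rfl, _, _, m 1, hc, hm, Nat.pos_of_ne_zero fun h => hm ?_, heq⟩
  rw [heq, h] at hroot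
  simpa using hroot

lemma IsLocallyNilpotent.exists_eq_of_isWeightedHomogeneous {N : ℤ}
    (hLN : IsLocallyNilpotent d) (hd : d ≠ 0) (ha : 0 < a) (hab : a ≤ b)
    (hr : IsWeightedHomogeneous ![(a : ℤ), b] r N) (hr0 : r ≠ 0) (hdr : d r = 0) {α β : K}
    (hα : α ≠ 0) (hβ : β ≠ 0) (hroot : eval ![α, β] r = 0) :
    ∃ (v : ℕ) (c e : K) (k : ℕ), b = v * a ∧ c ≠ 0 ∧ e ≠ 0 ∧ 0 < k ∧
      r = C e * (X 1 - C c * X 0 ^ v) ^ k := by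
  obtain ⟨a', b', hcop, hga, hgb⟩ := Nat.exists_coprime a b
  have hg : 0 < a.gcd b := Nat.gcd_pos_of_pos_left _ ha
  generalize a.gcd b = g at hg hga hgb
  subst hga hgb
  obtain ⟨m, hm⟩ := ne_zero_iff.1 hr0
  have hr' : IsWeightedHomogeneous ![a', b'] r (Finsupp.weight ![a', b'] m) := fun m' hm' => by
    have h := (hr hm').trans (hr hm).symm
    simp only [weight_fin_two, Matrix.cons_val_zero, Matrix.cons_val_one,
      Matrix.cons_val_fin_one, smul_eq_mul, nsmul_eq_mul] at h ⊢
    norm_cast at h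
    exact Nat.eq_of_mul_eq_mul_right hg (by linarith)
  have ha' : 0 < a' := Nat.pos_of_mul_pos_right ha
  have hab' : a' ≤ b' := Nat.le_of_mul_le_mul_right hab hg
  obtain ⟨rfl, c, e, k, hc, he, hk, heq⟩ :=
    hLN.exists_eq_of_isWeightedHomogeneous_of_coprime hd ha' hab' hcop hr' hr0 hdr hα hβ hroot
  exact ⟨b', c, e, k, by rw [one_mul], hc, he, hk, heq⟩

end BinaryKernel

section LeadingFormsOfAutomorphisms

section CommRing

variable {σ R : Type*} [CommRing R]

lemma apply_eq_aeval {A : Type*} [CommRing A] [Algebra R A] (F : MvPolynomial σ R ≃ₐ[R] A)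
    (g : MvPolynomial σ R) : F g = aeval (fun i => F (X i)) g :=
  DFunLike.congr_fun (aeval_unique (F : MvPolynomial σ R →ₐ[R] A)) g

lemma apply_X_ne_zero [Nontrivial R] (F : MvPolynomial σ R ≃ₐ[R] MvPolynomial σ R) (i : σ) :
    F (X i) ≠ 0 :=
  (map_ne_zero_iff F F.injective).2 (X_ne_zero i)

variable {F : MvPolynomial σ R ≃ₐ[R] MvPolynomial σ R} {w : σ → ℤ} {N : ℤ} {i : σ}
  {T : MvPolynomial σ R}

lemma aeval_leadingForm_eq_zero {p : σ → MvPolynomial σ R}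
    (hp : ∀ i, IsLeadingForm (1 : σ → ℤ) (w i) (F.symm (X i)) (p i))
    (hT : IsLeadingForm w N (F (X i)) T) (hN : 1 < N) : aeval p T = 0 := by
  have h := hT.aeval hp
  rw [← apply_eq_aeval, F.symm_apply_apply] at h
  exact h.eq_zero (X_mem_weightSupported hN)

lemma exists_isLocallyNilpotent_apply_leadingForm_eq_zero [Nontrivial R] [Finite σ] {j : σ}
    (hij : j ≠ i) (hT : IsLeadingForm w N (F (X i)) T) :
    ∃ d : Derivation R (MvPolynomial σ R) (MvPolynomial σ R),
      d ≠ 0 ∧ IsLocallyNilpotent d ∧ d T = 0 := by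
  classical
  have h0 : derivationConj F (pderiv j) ≠ 0 := fun h => by
    simpa [derivationConj_apply] using DFunLike.congr_fun h (F (X j))
  obtain ⟨δ, d, hd, hLN, hlead⟩ :=
    exists_isLeadingDerivation w ((isLocallyNilpotent_pderiv j).conj F) h0
  exact ⟨d, hd, hLN, (hlead hT).eq_zero (by simp [derivationConj_apply, pderiv_X_of_ne hij.symm])⟩

end CommRing

variable {K : Type*} [Field K] [CharZero K]
  {F : MvPolynomial (Fin 2) K ≃ₐ[K] MvPolynomial (Fin 2) K} {a b : ℕ} {p q : MvPolynomial (Fin 2) K}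

lemma exists_leadingForm_eq (ha : 0 < a) (hab : a ≤ b)
    (hp : IsLeadingForm 1 (a : ℤ) (F.symm (X 0)) p) (hp0 : p ≠ 0)
    (hq : IsLeadingForm 1 (b : ℤ) (F.symm (X 1)) q) (hq0 : q ≠ 0) {i : Fin 2} {N : ℤ}
    {T : MvPolynomial (Fin 2) K} (hT : IsLeadingForm ![(a : ℤ), b] N (F (X i)) T) (hT0 : T ≠ 0)
    (hN : 1 < N) :
    ∃ (v : ℕ) (c e : K) (k : ℕ), b = v * a ∧ c ≠ 0 ∧ e ≠ 0 ∧ 0 < k ∧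
      q = C c * p ^ v ∧ T = C e * (X 1 - C c * X 0 ^ v) ^ k := by
  obtain ⟨j, hj⟩ := exists_ne i
  obtain ⟨d, hd, hLN, hdT⟩ := exists_isLocallyNilpotent_apply_leadingForm_eq_zero hj hT
  have hpqT : aeval ![p, q] T = 0 :=
    aeval_leadingForm_eq_zero (Fin.forall_fin_two.2 ⟨hp, hq⟩) hT hN
  obtain ⟨z, hz⟩ : ∃ z, eval z (p * q) ≠ 0 := by
    by_contra! h
    exact mul_ne_zero hp0 hq0 (funext fun z => by rw [h z, map_zero])
  rw [map_mul] at hz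
  have hroot : eval ![eval z p, eval z q] T = 0 := by
    rw [← map_zero (eval z), ← hpqT, ← coe_aeval_eq_eval, ← coe_aeval_eq_eval]
    simp only [RingHom.coe_coe]
    rw [← AlgHom.comp_apply, comp_aeval]
    congr 2
    funext i
    fin_cases i <;> rfl
  obtain ⟨v, c, e, k, hv, hc, he, hk, rfl⟩ := hLN.exists_eq_of_isWeightedHomogeneous hd ha hab hT.1
    hT0 hdT (left_ne_zero_of_mul hz) (right_ne_zero_of_mul hz) hroot
  refine ⟨v, c, e, k, hv, hc, he, hk, ?_, rfl⟩
  have : C e * (q - C c * p ^ v) ^ k = 0 := by simpa [algebraMap_eq] using hpqT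
  simpa [he, hk.ne', sub_eq_zero] using this

lemma isLeadingForm_X_sub_C_mul_X_pow {R : Type*} [CommRing R] (v : ℕ) (c : R) :
    IsLeadingForm ![1, (v : ℤ)] (v : ℤ) (X 1 - C c * X 0 ^ v) (X 1 - C c * X 0 ^ v) := by
  have hx : IsLeadingForm ![1, (v : ℤ)] 1 (X 0 : MvPolynomial (Fin 2) R) (X 0) := .of_X _ 0
  have hy : IsLeadingForm ![1, (v : ℤ)] v (X 1 : MvPolynomial (Fin 2) R) (X 1) := .of_X _ 1
  exact hy.sub (by simpa using (hx.pow v).C_mul c)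

lemma exists_isLeadingForm_apply_X (ha : 0 < a) (hab : a ≤ b)
    (hp : IsLeadingForm 1 (a : ℤ) (F.symm (X 0)) p) (hp0 : p ≠ 0)
    (hq : IsLeadingForm 1 (b : ℤ) (F.symm (X 1)) q) (hq0 : q ≠ 0) {i : Fin 2} {d : Fin 2 →₀ ℕ}
    (hd : coeff d (F (X i)) ≠ 0) (hd1 : 1 < a * d 0 + b * d 1) :
    ∃ (v : ℕ) (c e : K) (k : ℕ), b = v * a ∧ c ≠ 0 ∧ e ≠ 0 ∧ 0 < k ∧ q = C c * p ^ v ∧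
      IsLeadingForm ![1, (v : ℤ)] ((v * k : ℕ) : ℤ) (F (X i))
        (C e * (X 1 - C c * X 0 ^ v) ^ k) := by
  obtain ⟨N, T, hT0, hT, -⟩ := exists_isLeadingForm_ne_zero ![(a : ℤ), b] (p := F (X i))
    (ne_zero_iff.2 ⟨d, hd⟩)
  have hdN := mem_weightSupported.1 hT.le d hd
  simp only [weight_fin_two, Matrix.cons_val_zero, Matrix.cons_val_one, Matrix.cons_val_fin_one,
    nsmul_eq_mul, Set.mem_Iic] at hdN
  obtain ⟨v, c, e, k, rfl, hc, he, hk, hqp, rfl⟩ :=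
    exists_leadingForm_eq ha hab hp hp0 hq hq0 hT hT0 (by zify at hd1; linarith)
  refine ⟨v, c, e, k, rfl, hc, he, hk, hqp, ?_⟩
  have hw : ![(a : ℤ), ((v * a : ℕ) : ℤ)] = a • ![1, (v : ℤ)] := by
    simp [mul_comm]
  have hform : IsLeadingForm ![1, (v : ℤ)] ((v * k : ℕ) : ℤ) (C e * (X 1 - C c * X 0 ^ v) ^ k)
      (C e * (X 1 - C c * X 0 ^ v) ^ k) := by
    simpa [mul_comm] using ((isLeadingForm_X_sub_C_mul_X_pow v c).pow k).C_mul e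
  rw [hw] at hT
  rw [← isLeadingForm_nsmul_iff ha] at hform ⊢
  rwa [← (IsLeadingForm.of_isWeightedHomogeneous hT.1).weight_unique hT0 hform hT0]

end LeadingFormsOfAutomorphisms

section Scaling

variable {σ R : Type*} [CommRing R]

lemma algEquiv_ext_X {F G : MvPolynomial σ R ≃ₐ[R] MvPolynomial σ R}
    (h : ∀ i, F (X i) = G (X i)) : F = G :=
  AlgEquiv.coe_toAlgHom_injective (algHom_ext h)

/-- The automorphism `X i ↦ ζ X i`, as a homomorphism in the unit `ζ`. -/
noncomputable def scaling : Rˣ →* (MvPolynomial σ R ≃ₐ[R] MvPolynomial σ R) where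
  toFun ζ := .ofAlgHom (aeval fun i => C (ζ : R) * X i) (aeval fun i => C (↑ζ⁻¹ : R) * X i)
    (by ext1 i; simp [algebraMap_eq, ← mul_assoc, ← C_mul])
    (by ext1 i; simp [algebraMap_eq, ← mul_assoc, ← C_mul])
  map_one' := algEquiv_ext_X fun i => by simp
  map_mul' ζ ξ := algEquiv_ext_X fun i => by simp [algebraMap_eq]; ring

lemma scaling_X (ζ : Rˣ) (i : σ) :
    scaling ζ (X i : MvPolynomial σ R) = C (ζ : R) * X i := by
  simp [scaling]

lemma coeff_scaling (ζ : Rˣ) (p : MvPolynomial σ R) (d : σ →₀ ℕ) :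
    coeff d (scaling ζ p) = (ζ : R) ^ d.degree * coeff d p := by
  classical
  induction p using MvPolynomial.induction_on' with
  | monomial e r =>
    have h : scaling ζ (monomial e r) = monomial e ((ζ : R) ^ e.degree * r) := by
      rw [apply_eq_aeval (scaling ζ)]
      simp only [scaling_X, aeval_monomial, mul_pow, Finsupp.prod_mul, ← C_pow]
      rw [monomial_eq (s := e), C_mul, Finsupp.degree_apply, ← Finset.prod_pow_eq_pow_sum, map_prod,
        algebraMap_eq]
      simp only [Finsupp.prod]
      ring
    rw [h, coeff_monomial, coeff_monomial]
    split_ifs with hed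
    · rw [hed]
    · rw [mul_zero]
  | add p q hp hq => rw [map_add, coeff_add, hp, hq, coeff_add, mul_add]

lemma commute_scaling_iff {ζ : Rˣ} {F : MvPolynomial σ R ≃ₐ[R] MvPolynomial σ R} :
    Commute (scaling ζ) F ↔ ∀ i, scaling ζ (F (X i)) = C (ζ : R) * F (X i) := by
  have hC (r : R) : F (C r) = C r := F.commutes r
  constructor
  · intro h i
    simpa [scaling_X, hC] using DFunLike.congr_fun h.eq (X i)
  · intro h
    exact algEquiv_ext_X fun i => by simp [scaling_X, hC, h]

lemma commute_scaling_renameEquiv (ζ : Rˣ) (e : σ ≃ σ) :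
    Commute (scaling ζ) (renameEquiv R e) :=
  commute_scaling_iff.2 fun i => by simp [scaling_X]

lemma exists_constantCoeff_pderiv_apply_X_ne_zero [Nontrivial R]
    (F : MvPolynomial σ R ≃ₐ[R] MvPolynomial σ R) (j : σ) :
    ∃ i, constantCoeff (pderiv j (F (X i))) ≠ 0 := by
  by_contra! h
  have hzero (p : MvPolynomial σ R) : constantCoeff (pderiv j (F p)) = 0 := by
    induction p using MvPolynomial.induction_on with
    | C r => rw [show F (C r) = C r from F.commutes r, pderiv_C, map_zero]
    | add p q hp hq => rw [map_add, map_add, map_add, hp, hq, add_zero]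
    | mul_X p i hp => simp [hp, h]
  simpa using hzero (F.symm (X j))

variable [IsDomain R] {ζ : Rˣ} {F : MvPolynomial σ R ≃ₐ[R] MvPolynomial σ R} {i : σ}

lemma pow_degree_eq_of_commute_scaling (hF : Commute (scaling ζ) F) {d : σ →₀ ℕ}
    (hd : coeff d (F (X i)) ≠ 0) : ζ ^ d.degree = ζ := by
  have h := congrArg (coeff d) (commute_scaling_iff.1 hF i)
  rw [coeff_scaling, coeff_C_mul] at h
  exact Units.ext (by simpa using mul_right_cancel₀ hd h)

lemma eq_of_semiconjBy_scaling [Nonempty σ] {ξ : Rˣ}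
    (hF : SemiconjBy F (scaling ζ) (scaling ξ)) : ζ = ξ := by
  obtain ⟨j⟩ := ‹Nonempty σ›
  obtain ⟨i, hi⟩ := exists_constantCoeff_pderiv_apply_X_ne_zero F j
  have hcoeff : coeff (Finsupp.single j 1) (F (X i)) ≠ 0 := by
    simpa [constantCoeff_eq, coeff_pderiv] using hi
  have hX : C (ζ : R) * F (X i) = scaling ξ (F (X i)) := by
    rw [← show F (C (ζ : R)) = C (ζ : R) from F.commutes _, ← map_mul, ← scaling_X]
    exact DFunLike.congr_fun hF.eq (X i)
  have h := congrArg (coeff (Finsupp.single j 1)) hX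
  rw [coeff_scaling, coeff_C_mul, Finsupp.degree_single, pow_one] at h
  exact Units.ext (mul_right_cancel₀ hcoeff h)

lemma constantCoeff_apply_X_eq_zero (hζ : ζ ≠ 1) (hF : Commute (scaling ζ) F) (i : σ) :
    constantCoeff (F (X i)) = 0 := by
  by_contra h
  exact hζ (by simpa using (pow_degree_eq_of_commute_scaling hF (d := 0) h).symm)

lemma totalDegree_apply_X_pos (F : MvPolynomial σ R ≃ₐ[R] MvPolynomial σ R) (i : σ) :
    0 < (F (X i)).totalDegree := by
  by_contra! h
  have hC := totalDegree_eq_zero_iff_eq_C.1 (Nat.le_zero.1 h)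
  have hX : (X i : MvPolynomial σ R) = C (coeff 0 (F (X i))) :=
    F.injective (hC.trans (F.commutes _).symm)
  simpa using congrArg totalDegree hX

lemma pow_eq_of_isLeadingForm {a : ℕ} {p : MvPolynomial σ R} (hF : Commute (scaling ζ) F)
    (hp : IsLeadingForm 1 (a : ℤ) (F (X i)) p) (hp0 : p ≠ 0) : ζ ^ a = ζ := by
  obtain ⟨d, hd⟩ := ne_zero_iff.1 hp0
  have hda : d.degree = a := by
    exact_mod_cast (weight_one_eq_degree d).symm.trans (hp.1 hd)
  exact hda ▸ pow_degree_eq_of_commute_scaling hF (hp.coeff_ne_zero hd)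

end Scaling

section AutomorphismDegree

variable {σ R : Type*} [Fintype σ] [CommRing R]

lemma eq_sum_C_mul_X_of_totalDegree_le_one {p : MvPolynomial σ R} (h₁ : p.totalDegree ≤ 1)
    (h₀ : constantCoeff p = 0) : p = ∑ i, C (coeff (Finsupp.single i 1) p) * X i := by
  classical
  ext d
  simp only [coeff_sum, coeff_C_mul, coeff_X]
  by_cases hd : ∃ i, Finsupp.single i 1 = d
  · obtain ⟨i, rfl⟩ := hd
    simp [Finsupp.single_left_inj]
  have hd1 : d.degree ≠ 1 := fun h =>
    hd ((Set.ext_iff.1 (Finsupp.range_single_one (σ := σ)) d).2 h)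
  push Not at hd
  simp only [hd, if_false, mul_zero, Finset.sum_const_zero]
  by_contra hne
  have hd0 : d.degree = 0 := by
    have : d.degree ≤ p.totalDegree := le_totalDegree (mem_support_iff.2 hne)
    lia
  rw [Finsupp.degree_eq_zero_iff] at hd0
  exact hne (by rwa [hd0])

/-- The largest total degree of the images of the variables under an automorphism. -/
noncomputable def automorphismDegree (F : MvPolynomial σ R ≃ₐ[R] MvPolynomial σ R) : ℕ :=
  Finset.univ.sup fun i => (F (X i)).totalDegree

lemma totalDegree_apply_X_le_automorphismDegree (F : MvPolynomial σ R ≃ₐ[R] MvPolynomial σ R)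
    (i : σ) : (F (X i)).totalDegree ≤ automorphismDegree F :=
  Finset.le_sup (f := fun i => (F (X i)).totalDegree) (Finset.mem_univ i)

lemma automorphismDegree_le_iff {F : MvPolynomial σ R ≃ₐ[R] MvPolynomial σ R} {D : ℕ} :
    automorphismDegree F ≤ D ↔ ∀ i, (F (X i)).totalDegree ≤ D := by
  simp [automorphismDegree]

variable (F G : MvPolynomial σ R ≃ₐ[R] MvPolynomial σ R)

lemma totalDegree_apply_le (p : MvPolynomial σ R) :
    (F p).totalDegree ≤ automorphismDegree F * p.totalDegree := by
  rw [apply_eq_aeval, ← mem_weightSupported_one_Iic]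
  refine aeval_mem_weightSupported_Iic (w := automorphismDegree F • 1)
    (mem_weightSupported.2 fun d hd => ?_) fun i => ?_
  · rw [weight_nsmul, weight_one_eq_degree, Set.mem_Iic, nsmul_eq_mul]
    have hdeg : d.degree ≤ p.totalDegree := le_totalDegree (mem_support_iff.2 hd)
    exact_mod_cast Nat.mul_le_mul_left _ hdeg
  · simpa using mem_weightSupported_one_Iic.2 (totalDegree_apply_X_le_automorphismDegree F i)

lemma automorphismDegree_mul_le :
    automorphismDegree (F * G) ≤ automorphismDegree F * automorphismDegree G :=
  automorphismDegree_le_iff.2 fun i => (totalDegree_apply_le F (G (X i))).trans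
    (Nat.mul_le_mul_left _ (totalDegree_apply_X_le_automorphismDegree G i))

lemma automorphismDegree_renameEquiv_le (e : σ ≃ σ) : automorphismDegree (renameEquiv R e) ≤ 1 :=
  automorphismDegree_le_iff.2 fun i => mem_weightSupported_one_Iic.1 <| by
    simpa using X_mem_weightSupported (R := R) (w := 1) (i := e i) (s := Set.Iic 1) (by simp)

variable {F G}

lemma automorphismDegree_conj_le (hG : automorphismDegree G ≤ 1)
    (hG' : automorphismDegree G⁻¹ ≤ 1) :
    automorphismDegree (G * F * G⁻¹) ≤ automorphismDegree F :=
  calc automorphismDegree (G * F * G⁻¹)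
      ≤ automorphismDegree G * automorphismDegree F * automorphismDegree G⁻¹ :=
        (automorphismDegree_mul_le _ _).trans
          (Nat.mul_le_mul_right _ (automorphismDegree_mul_le _ _))
    _ ≤ 1 * automorphismDegree F * 1 := by gcongr
    _ = automorphismDegree F := by ring

end AutomorphismDegree

lemma isLinearAut_of_automorphismDegree_le_one {K : Type*} [Field K]
    {F : MvPolynomial (Fin 2) K ≃ₐ[K] MvPolynomial (Fin 2) K} (h₁ : automorphismDegree F ≤ 1)
    (h₀ : ∀ i, constantCoeff (F (X i)) = 0) : IsLinearAut K F := by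
  let A : Matrix (Fin 2) (Fin 2) K := .of fun i j => coeff (Finsupp.single j 1) (F (X i))
  have hA (i : Fin 2) : F (X i) = ∑ j, C (A i j) * X j :=
    eq_sum_C_mul_X_of_totalDegree_le_one (automorphismDegree_le_iff.1 h₁ i) (h₀ i)
  have hdet : A.det ≠ 0 := by
    intro hdet
    obtain ⟨u, hu, huA⟩ := Matrix.exists_vecMul_eq_zero_iff.2 hdet
    have hFu : F (∑ i, C (u i) * X i) = ∑ j, C (Matrix.vecMul u A j) * X j := by
      simp only [map_sum, map_mul, hA, Matrix.vecMul, dotProduct, F.commutes, ← algebraMap_eq,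
        Finset.mul_sum, Finset.sum_mul, mul_assoc]
      exact Finset.sum_comm
    rw [huA] at hFu
    simp only [Pi.zero_apply, C_0, zero_mul, Finset.sum_const_zero, map_eq_zero_iff F F.injective]
      at hFu
    refine hu (funext fun i => ?_)
    simpa [coeff_sum, coeff_X, Finsupp.single_left_inj, -Fin.sum_univ_two] using
      congrArg (coeff (Finsupp.single i 1)) hFu
  exact ⟨A 0 0, A 0 1, A 1 0, A 1 1, by simpa [Matrix.det_fin_two] using hdet,
    by simpa using hA 0, by simpa using hA 1⟩

section Elementary

variable {R : Type*} [CommRing R]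

/-- The elementary automorphism `x ↦ x`, `y ↦ y + c x ^ v`. -/
noncomputable def shear (c : R) (v : ℕ) :
    MvPolynomial (Fin 2) R ≃ₐ[R] MvPolynomial (Fin 2) R :=
  .ofAlgHom (aeval ![X 0, X 1 + C c * X 0 ^ v]) (aeval ![X 0, X 1 - C c * X 0 ^ v])
    (by ext1 i; fin_cases i <;> simp [algebraMap_eq])
    (by ext1 i; fin_cases i <;> simp [algebraMap_eq])

variable (c : R) (v : ℕ)

lemma shear_apply (p : MvPolynomial (Fin 2) R) :
    shear c v p = aeval ![X 0, X 1 + C c * X 0 ^ v] p :=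
  rfl

lemma shear_X_zero : shear c v (X 0) = X 0 := by simp [shear_apply]

lemma shear_X_one : shear c v (X 1) = X 1 + C c * X 0 ^ v := by simp [shear_apply]

lemma shear_symm_X_zero : (shear c v).symm (X 0) = X 0 := by simp [shear]

lemma shear_symm_X_one : (shear c v).symm (X 1) = X 1 - C c * X 0 ^ v := by simp [shear]

variable {c v} {ζ : Rˣ} {w : ℕ} {N : ℤ} {D : ℕ} {p : MvPolynomial (Fin 2) R}
  {F : MvPolynomial (Fin 2) R ≃ₐ[R] MvPolynomial (Fin 2) R}

lemma commute_scaling_shear (hζ : ζ ^ v = ζ) : Commute (scaling ζ) (shear c v) := by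
  have hζ' : (ζ : R) ^ v = ζ := by exact_mod_cast congrArg Units.val hζ
  refine commute_scaling_iff.2 (Fin.forall_fin_two.2 ⟨?_, ?_⟩)
  · rw [shear_X_zero, scaling_X]
  · have hC : scaling ζ (C c : MvPolynomial (Fin 2) R) = C c := (scaling ζ).commutes c
    rw [shear_X_one, map_add, map_mul, map_pow, hC, scaling_X, scaling_X, mul_pow, ← C_pow, hζ']
    ring

lemma shear_X_mem_weightSupported (h : v ≤ w) (i : Fin 2) :
    ![X 0, X 1 + C c * X 0 ^ v] i ∈ weightSupported ![1, (w : ℤ)] (Set.Iic (![1, (w : ℤ)] i)) := by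
  revert i
  refine Fin.forall_fin_two.2 ⟨X_mem_weightSupported (by simp),
    add_mem (X_mem_weightSupported (by simp)) (C_mul_mem_weightSupported c ?_)⟩
  refine weightSupported_mono (Set.Iic_subset_Iic.2 ?_) ((IsLeadingForm.of_X _ 0).pow v).le
  simpa

lemma shear_mem_weightSupported_Iic (h : v ≤ w)
    (hp : p ∈ weightSupported ![1, (w : ℤ)] (Set.Iic N)) :
    shear c v p ∈ weightSupported ![1, (w : ℤ)] (Set.Iic N) :=
  aeval_mem_weightSupported_Iic hp (shear_X_mem_weightSupported h)

lemma shear_mem_weightSupported_Iio (h : v ≤ w)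
    (hp : p ∈ weightSupported ![1, (w : ℤ)] (Set.Iio N)) :
    shear c v p ∈ weightSupported ![1, (w : ℤ)] (Set.Iio N) :=
  aeval_mem_weightSupported_Iio hp (shear_X_mem_weightSupported h)

lemma automorphismDegree_shear_one_le (c : R) : automorphismDegree (shear c 1) ≤ 1 := by
  have hX (i : Fin 2) : (X i : MvPolynomial (Fin 2) R) ∈
      weightSupported (1 : Fin 2 → ℤ) (Set.Iic 1) :=
    X_mem_weightSupported (by simp)
  refine automorphismDegree_le_iff.2 fun i => mem_weightSupported_one_Iic.1 ?_
  revert i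
  refine Fin.forall_fin_two.2 ⟨?_, ?_⟩
  · simpa [shear_X_zero] using hX 0
  · simpa [shear_X_one] using add_mem (hX 1) (C_mul_mem_weightSupported c (hX 0))

lemma shear_inv (c : R) (v : ℕ) : (shear c v)⁻¹ = shear (-c) v :=
  algEquiv_ext_X <| Fin.forall_fin_two.2
    ⟨by simp [AlgEquiv.aut_inv, shear_symm_X_zero, shear_X_zero],
      by simp [AlgEquiv.aut_inv, shear_symm_X_one, shear_X_one, sub_eq_add_neg]⟩

lemma automorphismDegree_shear_conj_lt (hD : 0 < D)
    (h₀ : shear c v (F (X 0)) ∈ weightSupported (1 : Fin 2 → ℤ) (Set.Iio (D : ℤ)))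
    (h₁ : shear c v (F (X 1) - C c * F (X 0) ^ v) ∈
      weightSupported (1 : Fin 2 → ℤ) (Set.Iio (D : ℤ))) :
    automorphismDegree (shear c v * F * (shear c v)⁻¹) < D := by
  rw [automorphismDegree, Finset.sup_lt_iff hD]
  refine fun i _ => totalDegree_lt_of_mem_weightSupported hD ?_
  revert i
  refine Fin.forall_fin_two.2 ⟨?_, ?_⟩
  · simpa [AlgEquiv.aut_inv, shear_symm_X_zero] using h₀
  · have hC : F (C c) = C c := F.commutes c
    simpa [AlgEquiv.aut_inv, shear_symm_X_one, hC] using h₁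

lemma exists_conj_totalDegree_symm_lt_of_ne (ζ : Rˣ)
    (hne : (F.symm (X 0)).totalDegree ≠ (F.symm (X 1)).totalDegree) :
    ∃ G : MvPolynomial (Fin 2) R ≃ₐ[R] MvPolynomial (Fin 2) R, Commute (scaling ζ) G ∧
      automorphismDegree (G * F * G⁻¹) ≤ automorphismDegree F ∧
      ((G * F * G⁻¹).symm (X 0)).totalDegree < ((G * F * G⁻¹).symm (X 1)).totalDegree := by
  rcases hne.lt_or_gt with h | h
  · exact ⟨1, Commute.one_right _, by simp, by simpa using h⟩
  · refine ⟨renameEquiv R (Equiv.swap 0 1), commute_scaling_renameEquiv _ _,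
      automorphismDegree_conj_le (automorphismDegree_renameEquiv_le _)
        (automorphismDegree_renameEquiv_le _), ?_⟩
    rw [← AlgEquiv.aut_inv, mul_inv_rev, mul_inv_rev, inv_inv]
    simpa only [AlgEquiv.mul_apply, AlgEquiv.aut_inv, renameEquiv_symm, Equiv.symm_swap,
      renameEquiv_apply _ _ (X _), rename_X, Equiv.swap_apply_left, Equiv.swap_apply_right,
      totalDegree_renameEquiv] using h

end Elementary

section InfiniteOrder

variable {R : Type*} [CommRing R]
  {F : MvPolynomial (Fin 2) R ≃ₐ[R] MvPolynomial (Fin 2) R}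

variable {v : ℕ} {α c : R}

lemma isLeadingForm_iterate_of_unipotent (h₀ : F (X 0) = C α * X 0)
    (h₁ : IsLeadingForm ![1, (v : ℤ)] (v : ℤ) (F (X 1)) (C (α ^ v) * (X 1 - C c * X 0 ^ v)))
    (j : ℕ) : IsLeadingForm ![1, (v : ℤ)] (v : ℤ) ((F ^ j) (X 1))
      (C ((α ^ v) ^ j) * (X 1 - C (j * c) * X 0 ^ v)) := by
  induction j with
  | zero => simpa using IsLeadingForm.of_X ![1, (v : ℤ)] 1
  | succ j ih =>
    have h₀' : IsLeadingForm ![1, (v : ℤ)] 1 (F (X 0)) (C α * X 0) :=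
      h₀ ▸ (IsLeadingForm.of_X ![1, (v : ℤ)] 0).C_mul α
    have h := ih.aeval (w' := ![1, (v : ℤ)]) (P := fun i => F (X i))
      (P₀ := ![C α * X 0, C (α ^ v) * (X 1 - C c * X 0 ^ v)]) (Fin.forall_fin_two.2 ⟨h₀', h₁⟩)
    rw [← apply_eq_aeval, ← AlgEquiv.mul_apply, ← pow_succ'] at h
    convert h using 1
    simp [algebraMap_eq]
    ring

variable [IsDomain R]

lemma not_isOfFinOrder_of_unipotent [CharZero R] (hα : α ≠ 0) (hc : c ≠ 0)
    (h₀ : F (X 0) = C α * X 0)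
    (h₁ : IsLeadingForm ![1, (v : ℤ)] (v : ℤ) (F (X 1)) (C (α ^ v) * (X 1 - C c * X 0 ^ v))) :
    ¬ IsOfFinOrder F := by
  intro hfin
  obtain ⟨m, hm, hFm⟩ := isOfFinOrder_iff_pow_eq_one.1 hfin
  have h := isLeadingForm_iterate_of_unipotent h₀ h₁ m
  rw [hFm, AlgEquiv.one_apply] at h
  have hne : (Finsupp.single 1 1 : Fin 2 →₀ ℕ) ≠ Finsupp.single 0 v := fun hd => by
    simpa using DFunLike.congr_fun hd 1
  have h_coeff := congrArg (coeff (Finsupp.single 0 v)) ((IsLeadingForm.of_X _ 1).unique h)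
  rw [coeff_C_mul, coeff_sub, coeff_C_mul, coeff_X_pow, coeff_X] at h_coeff
  simp [hne, hα, hc, hm.ne'] at h_coeff

lemma isLeadingForm_iterate_of_two_le {d : ℕ} (hd : 0 < d) {e : R} (he : e ≠ 0)
    (h₀ : IsLeadingForm 1 (d : ℤ) (F (X 0)) (C e * X 0 ^ d)) (h₁ : (F (X 1)).totalDegree ≤ d)
    (j : ℕ) :
    ∃ e', e' ≠ 0 ∧ IsLeadingForm 1 ((d ^ j : ℕ) : ℤ) ((F ^ j) (X 0)) (C e' * X 0 ^ d ^ j) := by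
  obtain ⟨q, hq⟩ := exists_isLeadingForm (mem_weightSupported_one_Iic.2 h₁)
  induction j with
  | zero => exact ⟨1, one_ne_zero, by simpa using IsLeadingForm.of_X (1 : Fin 2 → ℤ) 0⟩
  | succ j ih =>
    obtain ⟨e', he', h⟩ := ih
    refine ⟨e' * e ^ d ^ j, mul_ne_zero he' (pow_ne_zero _ he), ?_⟩
    have h' := ((isLeadingForm_nsmul_iff hd).2 h).aeval (w' := 1) (P := fun i => F (X i))
      (P₀ := ![C e * X 0 ^ d, q]) (Fin.forall_fin_two.2 ⟨by simpa using h₀, by simpa using hq⟩)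
    rw [← apply_eq_aeval, ← AlgEquiv.mul_apply, ← pow_succ'] at h'
    convert h' using 1
    · push_cast; ring
    · simp [algebraMap_eq, mul_pow, ← pow_mul, pow_succ', mul_assoc]

lemma not_isOfFinOrder_of_isLeadingForm {d : ℕ} (hd : 2 ≤ d) {e : R} (he : e ≠ 0)
    (h₀ : IsLeadingForm 1 (d : ℤ) (F (X 0)) (C e * X 0 ^ d))
    (h₁ : (F (X 1)).totalDegree ≤ d) : ¬ IsOfFinOrder F := by
  intro hfin
  obtain ⟨m, hm, hFm⟩ := isOfFinOrder_iff_pow_eq_one.1 hfin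
  obtain ⟨e', he', h⟩ := isLeadingForm_iterate_of_two_le (by lia) he h₀ h₁ m
  have hdeg := h.totalDegree_eq (by simp [he'])
  rw [hFm, AlgEquiv.one_apply, totalDegree_X] at hdeg
  exact (Nat.one_lt_pow hm.ne' hd).ne hdeg

end InfiniteOrder

section Descent

section CommRing

variable {R : Type*} [CommRing R] {v k : ℕ} {N : ℤ} {c e : R} {p T : MvPolynomial (Fin 2) R}

lemma weightSupported_one_of_pos (hv : 0 < v) {s : Set ℤ} (hs : IsLowerSet s)
    (hp : p ∈ weightSupported ![1, (v : ℤ)] s) : p ∈ weightSupported 1 s :=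
  weightSupported_le_of_le (w := 1) (w' := ![1, (v : ℤ)]) hs
    (Fin.forall_fin_two.2 ⟨le_rfl, by simp; lia⟩) hp

lemma IsLeadingForm.one_of_two_le (hv : 2 ≤ v)
    (h : IsLeadingForm ![1, (v : ℤ)] ((v * k : ℕ) : ℤ) T (C e * (X 1 - C c * X 0 ^ v) ^ k)) :
    IsLeadingForm 1 ((v * k : ℕ) : ℤ) T (C (e * (-c) ^ k) * X 0 ^ (v * k)) := by
  have hy : IsLeadingForm (1 : Fin 2 → ℤ) v (X 1 : MvPolynomial (Fin 2) R) 0 :=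
    .of_lt (X_mem_weightSupported (by simp; lia))
  have hx : IsLeadingForm (1 : Fin 2 → ℤ) v (X 0 ^ v : MvPolynomial (Fin 2) R) (X 0 ^ v) := by
    simpa using (IsLeadingForm.of_X (1 : Fin 2 → ℤ) 0).pow v
  have hform := ((hy.sub (hx.C_mul c)).pow k).C_mul e
  have hrest := IsLeadingForm.of_lt (weightSupported_one_of_pos (by lia) (isLowerSet_Iio _) h.2)
  convert (show k • (v : ℤ) = ((v * k : ℕ) : ℤ) by simp [mul_comm]) ▸ hform |>.add hrest using 1
  · ring
  · rw [zero_sub, add_zero, ← neg_mul, ← C_neg, mul_pow, ← pow_mul, ← C_pow, ← mul_assoc,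
      ← MvPolynomial.C_mul]

lemma shear_mem_weightSupported_one_of_isLeadingForm (hv : 2 ≤ v) (hk : 0 < k)
    (h : IsLeadingForm ![1, (v : ℤ)] ((v * k : ℕ) : ℤ) T (C e * (X 1 - C c * X 0 ^ v) ^ k)) :
    shear c v T ∈ weightSupported 1 (Set.Iio ((v * k : ℕ) : ℤ)) := by
  have hrest := weightSupported_one_of_pos (by lia) (isLowerSet_Iio _)
    (shear_mem_weightSupported_Iio (c := c) le_rfl h.2)
  have hform : shear c v (C e * (X 1 - C c * X 0 ^ v) ^ k) = C e * X 1 ^ k := by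
    have hC (r : R) : shear c v (C r) = C r := (shear c v).commutes r
    simp [hC, shear_X_zero, shear_X_one]
  rw [map_sub, hform] at hrest
  have hlt : k < v * k := by nlinarith
  have hX : C e * X 1 ^ k ∈
      weightSupported (1 : Fin 2 → ℤ) (Set.Iio ((v * k : ℕ) : ℤ)) := by
    refine weightSupported_mono (Set.Iic_subset_Iio.2 ?_)
      (((IsLeadingForm.of_X _ 1).pow k).C_mul e).le
    simpa using mod_cast hlt
  simpa using add_mem hrest hX

end CommRing

section Field

variable {K : Type*} [Field K] {F : MvPolynomial (Fin 2) K ≃ₐ[K] MvPolynomial (Fin 2) K}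
  {v w k l : ℕ} {c e e₁ e₂ α : K}

lemma automorphismDegree_shear_conj_lt_of_le (hv : 0 < v) (hl : 0 < l) (hw : 2 ≤ w) (hwv : w ≤ v)
    (he₁ : e₁ ≠ 0)
    (h₀ : IsLeadingForm ![1, (v : ℤ)] ((v * l : ℕ) : ℤ) (F (X 0))
      (C e₁ * (X 1 - C c * X 0 ^ v) ^ l))
    (h₁ : IsLeadingForm ![1, (v : ℤ)] ((v * (w * l) : ℕ) : ℤ) (F (X 1))
      (C e₂ * (X 1 - C c * X 0 ^ v) ^ (w * l))) :
    automorphismDegree (shear (e₂ / e₁ ^ w) w * F * (shear (e₂ / e₁ ^ w) w)⁻¹) < v * (w * l) := by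
  have hlt : v * l < v * (w * l) := by
    have : 0 < v * l := by positivity
    nlinarith
  refine automorphismDegree_shear_conj_lt (by positivity) ?_ ?_
  · exact weightSupported_mono (Set.Iic_subset_Iio.2 (mod_cast hlt)) <|
      weightSupported_one_of_pos hv (isLowerSet_Iic _) (shear_mem_weightSupported_Iic hwv h₀.le)
  · refine weightSupported_one_of_pos hv (isLowerSet_Iio _)
      (shear_mem_weightSupported_Iio hwv (IsLeadingForm.lt_of_zero ?_))
    have hpow := (h₀.pow w).C_mul (e₂ / e₁ ^ w)
    rw [show w • ((v * l : ℕ) : ℤ) = ((v * (w * l) : ℕ) : ℤ) by push_cast; ring] at hpow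
    convert h₁.sub hpow using 1
    rw [mul_pow, ← C_pow, ← mul_assoc, ← C_mul, div_mul_cancel₀ _ (pow_ne_zero w he₁), ← pow_mul,
      mul_comm l, sub_self]

lemma automorphismDegree_shear_conj_lt_of_lt (hv : 2 ≤ v) (hl : 0 < l) (hvw : v < w)
    (h₀ : IsLeadingForm ![1, (v : ℤ)] ((v * l : ℕ) : ℤ) (F (X 0))
      (C e₁ * (X 1 - C c * X 0 ^ v) ^ l))
    (h₁ : IsLeadingForm ![1, (v : ℤ)] ((v * (w * l) : ℕ) : ℤ) (F (X 1))
      (C e₂ * (X 1 - C c * X 0 ^ v) ^ (w * l))) :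
    automorphismDegree (shear c v * F * (shear c v)⁻¹) < v * (w * l) := by
  have hP := shear_mem_weightSupported_one_of_isLeadingForm hv hl h₀
  have hlt : v * (v * l) < v * (w * l) := by gcongr
  have hwl : 0 < w * l := Nat.mul_pos (by lia) hl
  have hle : v * l ≤ v * (w * l) :=
    (Nat.le_mul_of_pos_left _ (by lia)).trans hlt.le
  refine automorphismDegree_shear_conj_lt (Nat.zero_lt_of_lt hlt) ?_ ?_
  · exact weightSupported_mono (Set.Iio_subset_Iio (mod_cast hle)) hP
  · have hC : shear c v (C c) = C c := (shear c v).commutes c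
    rw [map_sub, map_mul, map_pow, hC]
    have hpow := (((IsLeadingForm.of_lt hP).pow v).C_mul c).le
    refine sub_mem (shear_mem_weightSupported_one_of_isLeadingForm hv hwl h₁)
      (weightSupported_mono (Set.Iic_subset_Iio.2 ?_) hpow)
    simpa using mod_cast hlt

lemma automorphismDegree_shear_conj_lt_of_one_lt (hv : 2 ≤ v) (hk : 1 < k)
    (h₀ : F (X 0) = C α * X 0)
    (h₁ : IsLeadingForm ![1, (v : ℤ)] ((v * k : ℕ) : ℤ) (F (X 1))
      (C e * (X 1 - C c * X 0 ^ v) ^ k)) :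
    automorphismDegree (shear c v * F * (shear c v)⁻¹) < v * k := by
  have hC (r : K) : shear c v (C r) = C r := (shear c v).commutes r
  have hlt : v < v * k := by nlinarith
  have hX : shear c v (F (X 0)) = C α * X 0 := by rw [h₀, map_mul, hC, shear_X_zero]
  have hα : IsLeadingForm (1 : Fin 2 → ℤ) 1 (C α * X 0) (C α * X 0) :=
    (IsLeadingForm.of_X (1 : Fin 2 → ℤ) 0).C_mul α
  refine automorphismDegree_shear_conj_lt (by lia) ?_ ?_
  · rw [hX]
    exact weightSupported_mono (Set.Iic_subset_Iio.2 (by exact_mod_cast (by lia : 1 < v * k))) hα.le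
  · rw [map_sub, map_mul, map_pow, hC, hX]
    refine sub_mem (shear_mem_weightSupported_one_of_isLeadingForm hv (by lia) h₁)
      (weightSupported_mono (Set.Iic_subset_Iio.2 ?_) ((hα.pow v).C_mul c).le)
    simpa using mod_cast hlt

lemma automorphismDegree_shear_conj_lt_of_ne (hv : 2 ≤ v) (hα : e ≠ α ^ v)
    (h₀ : F (X 0) = C α * X 0)
    (h₁ : IsLeadingForm ![1, (v : ℤ)] (v : ℤ) (F (X 1)) (C e * (X 1 - C c * X 0 ^ v))) :
    automorphismDegree (shear (e * c / (e - α ^ v)) v * F * (shear (e * c / (e - α ^ v)) v)⁻¹) <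
      v := by
  set s := e * c / (e - α ^ v) with hs
  have hC (r : K) : shear s v (C r) = C r := (shear s v).commutes r
  have hv' : (1 : ℤ) < v := by exact_mod_cast hv
  refine automorphismDegree_shear_conj_lt (by lia) ?_ ?_
  · rw [h₀, map_mul, hC, shear_X_zero]
    exact C_mul_mem_weightSupported α (X_mem_weightSupported hv')
  · have hrest := weightSupported_one_of_pos (by lia) (isLowerSet_Iio _)
      (shear_mem_weightSupported_Iio (c := s) le_rfl h₁.2)
    have hs0 : C (e * s - α ^ v * s - e * c) = (0 : MvPolynomial (Fin 2) K) := by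
      rw [← sub_mul, hs, mul_div_cancel₀ _ (sub_ne_zero.2 hα), sub_self, C_0]
    have heq : shear s v (F (X 1) - C s * F (X 0) ^ v) =
        C e * X 1 + shear s v (F (X 1) - C e * (X 1 - C c * X 0 ^ v)) := by
      simp only [map_sub, map_mul, map_pow] at hs0
      simp only [h₀, map_sub, map_mul, map_pow, hC, shear_X_zero, shear_X_one]
      linear_combination (X 0 ^ v) * hs0
    rw [heq]
    exact add_mem (C_mul_mem_weightSupported e (X_mem_weightSupported hv')) hrest

lemma not_apply_X_eq_C_mul {α β : K} (hβ : β ≠ 0) (h₀ : F (X 0) = C α * X 0) :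
    F (X 1) ≠ C β * X 0 := by
  intro h₁
  have hC (r : K) : F (C r) = C r := F.commutes r
  have h : C β * X 0 = (C α * X 1 : MvPolynomial (Fin 2) K) := by
    apply F.injective
    rw [map_mul, map_mul, hC, hC, h₀, h₁]
    ring
  simpa [hβ] using congrArg (eval ![1, 0]) h

variable [CharZero K] {a b : ℕ} {p q : MvPolynomial (Fin 2) K}

lemma apply_X_eq_or_isLeadingForm (h₀ : ∀ i, constantCoeff (F (X i)) = 0) (ha : 0 < a)
    (hab : a < b) (hp : IsLeadingForm 1 (a : ℤ) (F.symm (X 0)) p) (hp0 : p ≠ 0)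
    (hq : IsLeadingForm 1 (b : ℤ) (F.symm (X 1)) q) (hq0 : q ≠ 0) (i : Fin 2) :
    (∃ α, α ≠ 0 ∧ F (X i) = C α * X 0) ∨
      ∃ (v : ℕ) (c e : K) (k : ℕ), 2 ≤ v ∧ b = v * a ∧ c ≠ 0 ∧ e ≠ 0 ∧ 0 < k ∧ q = C c * p ^ v ∧
        IsLeadingForm ![1, (v : ℤ)] ((v * k : ℕ) : ℤ) (F (X i))
          (C e * (X 1 - C c * X 0 ^ v) ^ k) := by
  by_cases hd : ∃ d, coeff d (F (X i)) ≠ 0 ∧ 1 < a * d 0 + b * d 1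
  · obtain ⟨d, hd, hd1⟩ := hd
    obtain ⟨v, c, e, k, rfl, h⟩ := exists_isLeadingForm_apply_X ha hab.le hp hp0 hq hq0 hd hd1
    exact .inr ⟨v, c, e, k, by nlinarith, rfl, h⟩
  push Not at hd
  left
  have hdeg : (F (X i)).totalDegree ≤ 1 := by
    refine mem_weightSupported_one_Iic.1 (mem_weightSupported.2 fun d hd' => ?_)
    have hd1 := hd d hd'
    rw [weight_one_eq_degree, Finsupp.degree_eq_sum, Fin.sum_univ_two, Set.mem_Iic]
    exact_mod_cast (by nlinarith : d 0 + d 1 ≤ 1)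
  have hy : coeff (Finsupp.single 1 1) (F (X i)) = 0 := by
    by_contra hne
    have := hd _ hne
    simp at this
    lia
  have hFi := eq_sum_C_mul_X_of_totalDegree_le_one hdeg (h₀ i)
  rw [Fin.sum_univ_two, hy, C_0, zero_mul, add_zero] at hFi
  refine ⟨_, fun hα => ?_, hFi⟩
  exact apply_X_ne_zero F i (by rw [hFi, hα, C_0, zero_mul])

variable {ζ : Kˣ}

lemma exists_shear_conj_automorphismDegree_lt_of_isLeadingForm (hζ : ζ ≠ 1)
    (hF : Commute (scaling ζ) F) (hv : 2 ≤ v) (hζv : ζ ^ v = ζ) (hc : c ≠ 0) (he₁ : e₁ ≠ 0)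
    (he₂ : e₂ ≠ 0) (hl : 0 < l) (hlk : l < k)
    (h₀ : IsLeadingForm ![1, (v : ℤ)] ((v * l : ℕ) : ℤ) (F (X 0))
      (C e₁ * (X 1 - C c * X 0 ^ v) ^ l))
    (h₁ : IsLeadingForm ![1, (v : ℤ)] ((v * k : ℕ) : ℤ) (F (X 1))
      (C e₂ * (X 1 - C c * X 0 ^ v) ^ k)) :
    ∃ s u, ζ ^ u = ζ ∧ automorphismDegree (shear s u * F * (shear s u)⁻¹) < v * k := by
  have hp := h₀.one_of_two_le hv
  have hq := h₁.one_of_two_le hv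
  have hp0 : C (e₁ * (-c) ^ l) * X 0 ^ (v * l) ≠ (0 : MvPolynomial (Fin 2) K) := by simp [he₁, hc]
  have hq0 : C (e₂ * (-c) ^ k) * X 0 ^ (v * k) ≠ (0 : MvPolynomial (Fin 2) K) := by simp [he₂, hc]
  have hvlk : v * l < v * k := by gcongr
  obtain ⟨d, hd⟩ := ne_zero_iff.1 (apply_X_ne_zero F.symm 1)
  have hd1 : 1 < v * l * d 0 + v * k * d 1 := by
    have hd0 : d 0 ≠ 0 ∨ d 1 ≠ 0 := by
      by_contra! h
      obtain rfl : d = 0 := finsupp_fin_two_ext h.1 h.2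
      exact hd (constantCoeff_apply_X_eq_zero hζ hF.inv_right 1)
    have hvl : 2 ≤ v * l := by nlinarith
    rcases hd0 with h | h
    · nlinarith [Nat.pos_of_ne_zero h]
    · nlinarith [Nat.pos_of_ne_zero h]
  -- `F⁻¹` also satisfies the hypotheses, so the degree of `F (X 0)` divides that of `F (X 1)`.
  obtain ⟨w, -, -, -, hw, -⟩ := exists_isLeadingForm_apply_X (F := F.symm) (by positivity) hvlk.le
    hp hp0 hq hq0 hd hd1
  obtain rfl : k = w * l := Nat.eq_of_mul_eq_mul_left (by lia : 0 < v) (by rw [hw]; ring)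
  have hζw : ζ ^ w = ζ := by
    have hζp := pow_eq_of_isLeadingForm hF hp hp0
    have hζq := pow_eq_of_isLeadingForm hF hq hq0
    rwa [hw, mul_comm, pow_mul, hζp] at hζq
  rcases le_or_gt w v with hwv | hvw
  · exact ⟨_, w, hζw,
      automorphismDegree_shear_conj_lt_of_le (by lia) hl (by nlinarith) hwv he₁ h₀ h₁⟩
  · exact ⟨_, v, hζv, automorphismDegree_shear_conj_lt_of_lt hv hl hvw h₀ h₁⟩

lemma exists_shear_conj_automorphismDegree_lt_of_apply_X_zero (hfin : IsOfFinOrder F) (hv : 2 ≤ v)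
    (hc : c ≠ 0) (hk : 0 < k) (h₀ : F (X 0) = C α * X 0) (hα : α ≠ 0)
    (h₁ : IsLeadingForm ![1, (v : ℤ)] ((v * k : ℕ) : ℤ) (F (X 1))
      (C e * (X 1 - C c * X 0 ^ v) ^ k)) :
    ∃ s, automorphismDegree (shear s v * F * (shear s v)⁻¹) < v * k := by
  obtain rfl | hk1 := Nat.eq_or_lt_of_le hk
  · simp only [Nat.succ_eq_add_one, zero_add, mul_one, pow_one] at h₁ ⊢
    refine ⟨_, automorphismDegree_shear_conj_lt_of_ne hv (fun heα => ?_) h₀ h₁⟩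
    exact not_isOfFinOrder_of_unipotent hα hc h₀ (heα ▸ h₁) hfin
  · exact ⟨_, automorphismDegree_shear_conj_lt_of_one_lt hv hk1 h₀ h₁⟩

lemma exists_shear_conj_automorphismDegree_lt (hζ : ζ ≠ 1) (hF : Commute (scaling ζ) F)
    (hfin : IsOfFinOrder F) (hab : (F.symm (X 0)).totalDegree < (F.symm (X 1)).totalDegree) :
    ∃ c v, ζ ^ v = ζ ∧
      automorphismDegree (shear c v * F * (shear c v)⁻¹) < automorphismDegree F := by
  obtain ⟨p, hp0, hp⟩ := exists_isLeadingForm_totalDegree (apply_X_ne_zero F.symm 0)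
  obtain ⟨q, hq0, hq⟩ := exists_isLeadingForm_totalDegree (apply_X_ne_zero F.symm 1)
  have hζ_pow {v : ℕ} (hv : (F.symm (X 1)).totalDegree = v * (F.symm (X 0)).totalDegree) :
      ζ ^ v = ζ := by
    have hζp := pow_eq_of_isLeadingForm hF.inv_right hp hp0
    have hζq := pow_eq_of_isLeadingForm hF.inv_right hq hq0
    rwa [hv, mul_comm, pow_mul, hζp] at hζq
  have hdeg := totalDegree_apply_X_le_automorphismDegree F 1
  have hclass := apply_X_eq_or_isLeadingForm (constantCoeff_apply_X_eq_zero hζ hF)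
    (totalDegree_apply_X_pos F.symm 0) hab hp hp0 hq hq0
  rcases hclass 0 with ⟨α, hα, h₀⟩ | ⟨v, c, e₁, l, hv, hvab, hc, he₁, hl, hqp, h₀⟩
  · rcases hclass 1 with ⟨β, hβ, h₁⟩ | ⟨v, c, e, k, hv, hvab, hc, he, hk, -, h₁⟩
    · exact absurd h₁ (not_apply_X_eq_C_mul hβ h₀)
    obtain ⟨s, hs⟩ := exists_shear_conj_automorphismDegree_lt_of_apply_X_zero hfin hv hc hk h₀ hα h₁
    rw [(h₁.one_of_two_le hv).totalDegree_eq (by simp [he, hc])] at hdeg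
    exact ⟨s, v, hζ_pow hvab, hs.trans_le hdeg⟩
  have hle : ¬ (F (X 1)).totalDegree ≤ v * l := fun h => not_isOfFinOrder_of_isLeadingForm
    (by nlinarith) (by simp [he₁, hc]) (h₀.one_of_two_le hv) h hfin
  rcases hclass 1 with ⟨β, -, h₁⟩ | ⟨w, c', e₂, k, hw, hwab, hc', he₂, hk, hqp', h₁⟩
  · refine absurd ?_ hle
    calc (F (X 1)).totalDegree ≤ 0 + 1 := by
          rw [h₁]
          exact (totalDegree_mul _ _).trans (by rw [totalDegree_C, totalDegree_X])
      _ ≤ v * l := by nlinarith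
  obtain rfl : v = w := Nat.eq_of_mul_eq_mul_right (totalDegree_apply_X_pos F.symm 0)
    (hvab.symm.trans hwab)
  obtain rfl : c = c' :=
    C_injective _ _ (mul_right_cancel₀ (pow_ne_zero v hp0) (hqp.symm.trans hqp'))
  rw [(h₁.one_of_two_le hv).totalDegree_eq (by simp [he₂, hc])] at hle hdeg
  obtain ⟨s, u, hu, hs⟩ := exists_shear_conj_automorphismDegree_lt_of_isLeadingForm hζ hF hv
    (hζ_pow hvab) hc he₁ he₂ hl (by nlinarith) h₀ h₁
  exact ⟨s, u, hu, hs.trans_le hdeg⟩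

lemma exists_shear_conj_totalDegree_symm_lt (hF : 2 ≤ automorphismDegree F)
    (heq : (F.symm (X 0)).totalDegree = (F.symm (X 1)).totalDegree) :
    ∃ c : K, ((shear c 1 * F * (shear c 1)⁻¹).symm (X 1)).totalDegree <
      ((shear c 1 * F * (shear c 1)⁻¹).symm (X 0)).totalDegree := by
  obtain ⟨p, hp0, hp⟩ := exists_isLeadingForm_totalDegree (apply_X_ne_zero F.symm 0)
  obtain ⟨q, hq0, hq⟩ := exists_isLeadingForm_totalDegree (apply_X_ne_zero F.symm 1)
  have ha := totalDegree_apply_X_pos F.symm 0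
  obtain ⟨i, d, hd, hd2⟩ : ∃ i d, coeff d (F (X i)) ≠ 0 ∧ 2 ≤ d 0 + d 1 := by
    by_contra! h
    refine hF.not_gt (Nat.lt_succ_iff.2 (automorphismDegree_le_iff.2 fun i => ?_))
    refine mem_weightSupported_one_Iic.1 (mem_weightSupported.2 fun d hd => ?_)
    rw [weight_one_eq_degree, Finsupp.degree_eq_sum, Fin.sum_univ_two, Set.mem_Iic]
    exact_mod_cast Nat.lt_succ_iff.1 (h i d hd)
  obtain ⟨v, c, -, -, hv, -, -, -, hqp, -⟩ := exists_isLeadingForm_apply_X ha heq.le hp hp0 hq hq0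
    hd (by nlinarith)
  obtain rfl : v = 1 := Nat.eq_of_mul_eq_mul_right ha (by rw [← hv, one_mul, heq])
  have hcancel : (F.symm (X 1 - C c * X 0)).totalDegree < (F.symm (X 0)).totalDegree := by
    refine totalDegree_lt_of_mem_weightSupported ha (IsLeadingForm.lt_of_zero ?_)
    have hC : F.symm (C c) = C c := F.symm.commutes c
    rw [pow_one] at hqp
    rw [← sub_eq_zero.2 hqp, map_sub, map_mul, hC]
    exact (heq.symm ▸ hq).sub (hp.C_mul c)
  refine ⟨c, ?_⟩
  rw [← AlgEquiv.aut_inv, mul_inv_rev, mul_inv_rev, inv_inv]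
  simp only [AlgEquiv.mul_apply, AlgEquiv.aut_inv, shear_symm_X_zero, shear_symm_X_one, pow_one]
  calc _ ≤ 1 * _ := (totalDegree_apply_le _ _).trans
        (Nat.mul_le_mul_right _ (automorphismDegree_shear_one_le c))
    _ < (F.symm (X 0)).totalDegree := by rwa [one_mul]
    _ = (shear (-c) 1 (shear c 1 (F.symm (X 0)))).totalDegree := by
        rw [← shear_inv, AlgEquiv.aut_inv, AlgEquiv.symm_apply_apply]
    _ ≤ 1 * _ := (totalDegree_apply_le _ _).trans
        (Nat.mul_le_mul_right _ (automorphismDegree_shear_one_le (-c)))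
    _ = _ := one_mul _

lemma exists_conj_totalDegree_symm_lt (ζ : Kˣ) (hF : 2 ≤ automorphismDegree F) :
    ∃ G : MvPolynomial (Fin 2) K ≃ₐ[K] MvPolynomial (Fin 2) K, Commute (scaling ζ) G ∧
      automorphismDegree (G * F * G⁻¹) ≤ automorphismDegree F ∧
      ((G * F * G⁻¹).symm (X 0)).totalDegree < ((G * F * G⁻¹).symm (X 1)).totalDegree := by
  by_cases heq : (F.symm (X 0)).totalDegree = (F.symm (X 1)).totalDegree
  · obtain ⟨c, hc⟩ := exists_shear_conj_totalDegree_symm_lt hF heq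
    obtain ⟨G, hG, hdeg, hlt⟩ := exists_conj_totalDegree_symm_lt_of_ne ζ hc.ne'
    have hassoc : G * shear c 1 * F * (G * shear c 1)⁻¹ =
        G * (shear c 1 * F * (shear c 1)⁻¹) * G⁻¹ := by simp only [mul_inv_rev, mul_assoc]
    refine ⟨G * shear c 1, hG.mul_right (commute_scaling_shear (pow_one ζ)), ?_, ?_⟩
    · rw [hassoc]
      refine hdeg.trans (automorphismDegree_conj_le (automorphismDegree_shear_one_le c) ?_)
      rw [shear_inv]
      exact automorphismDegree_shear_one_le _
    · rwa [hassoc]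
  · exact exists_conj_totalDegree_symm_lt_of_ne ζ heq

lemma exists_conj_automorphismDegree_lt (hζ : ζ ≠ 1) (hF : Commute (scaling ζ) F)
    (hfin : IsOfFinOrder F) (hdeg : 2 ≤ automorphismDegree F) :
    ∃ G : MvPolynomial (Fin 2) K ≃ₐ[K] MvPolynomial (Fin 2) K, Commute (scaling ζ) G ∧
      automorphismDegree (G * F * G⁻¹) < automorphismDegree F := by
  obtain ⟨G, hG, hle, hlt⟩ := exists_conj_totalDegree_symm_lt ζ hdeg
  obtain ⟨c, v, hv, hs⟩ := exists_shear_conj_automorphismDegree_lt hζ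
    ((hG.mul_right hF).mul_right hG.inv_right) ((isConj_iff.2 ⟨G, rfl⟩).isOfFinOrder hfin) hlt
  refine ⟨shear c v * G, (commute_scaling_shear hv).mul_right hG, ?_⟩
  simpa only [mul_inv_rev, mul_assoc] using hs.trans_le hle

theorem exists_conj_isLinearAut (hζ : ζ ≠ 1) (hF : Commute (scaling ζ) F)
    (hfin : IsOfFinOrder F) :
    ∃ G : MvPolynomial (Fin 2) K ≃ₐ[K] MvPolynomial (Fin 2) K, Commute (scaling ζ) G ∧
      IsLinearAut K (G * F * G⁻¹) := by
  induction hD : automorphismDegree F using Nat.strong_induction_on generalizing F with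
  | _ D ih =>
    subst hD
    rcases Nat.lt_or_ge 1 (automorphismDegree F) with hdeg | hdeg
    · obtain ⟨G, hG, hlt⟩ := exists_conj_automorphismDegree_lt hζ hF hfin hdeg
      obtain ⟨H, hH, hlin⟩ := ih _ hlt ((hG.mul_right hF).mul_right hG.inv_right)
        ((isConj_iff.2 ⟨G, rfl⟩).isOfFinOrder hfin) rfl
      exact ⟨H * G, hH.mul_right hG, by simpa only [mul_inv_rev, mul_assoc] using hlin⟩
    · exact ⟨1, Commute.one_right _, by
        simpa using isLinearAut_of_automorphismDegree_le_one hdeg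
          (constantCoeff_apply_X_eq_zero hζ hF)⟩

end Field

end Descent

section Factorization

lemma exists_eq_mul_pow_mul_pow {R : Type*} [CommRing R] [IsDomain R]
    [UniqueFactorizationMonoid R] {n : ℕ} {A : ℕ → R} (h₀ : A 0 ≠ 0)
    (hA : ∀ i ≤ n, A i * A 0 ^ i = A 0 * A 1 ^ i) :
    ∃ h P Q, ∀ i ≤ n, A i = h * (P ^ (n - i) * Q ^ i) := by
  obtain ⟨P, Q, c, hPQ, hP, hQ⟩ := UniqueFactorizationMonoid.exists_reduced_factors _ h₀ (A 1)
  have hc : c ≠ 0 := left_ne_zero_of_mul (hP.trans_ne h₀)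
  have hP₀ : P ≠ 0 := right_ne_zero_of_mul (hP.trans_ne h₀)
  have hreduced {i : ℕ} (hi : i ≤ n) : A i * P ^ i = A 0 * Q ^ i := by
    refine mul_right_cancel₀ (pow_ne_zero i hc) ?_
    linear_combination hA i hi + A i * congrArg (· ^ i) hP - A 0 * congrArg (· ^ i) hQ
  obtain ⟨h, hh⟩ : P ^ n ∣ A 0 :=
    hPQ.pow.dvd_of_dvd_mul_right ((Dvd.intro_left _ rfl).trans (hreduced le_rfl).dvd)
  refine ⟨h, P, Q, fun i hi => mul_right_cancel₀ (pow_ne_zero i hP₀) ?_⟩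
  rw [hreduced hi, hh, ← Nat.sub_add_cancel hi, pow_add, Nat.add_sub_cancel]
  ring

variable {σ R : Type*} [CommRing R] [IsDomain R] {n : ℕ} {i j : σ}

lemma vars_subset_of_dvd {p q : MvPolynomial σ R} (hpq : p ∣ q) (hq : q ≠ 0) :
    p.vars ⊆ q.vars := by
  obtain ⟨r, rfl⟩ := hpq
  intro k
  simp only [mem_vars_iff_degreeOf_ne_zero,
    degreeOf_mul_eq (left_ne_zero_of_mul hq) (right_ne_zero_of_mul hq)]
  lia

lemma X_pow_sub_C_ne_zero (hn : n ≠ 0) (i : σ) (a : R) : X i ^ n - C a ≠ 0 := by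
  intro h
  have := congrArg totalDegree (sub_eq_zero.1 h)
  rw [totalDegree_X_pow, totalDegree_C] at this
  exact hn this

lemma vars_X_pow_sub_C_subset (n : ℕ) (i : σ) (a : R) : (X i ^ n - C a).vars ⊆ {i} := by
  classical
  refine (vars_sub_subset _).trans ?_
  rw [vars_C, Finset.union_empty]
  exact (vars_pow _ _).trans vars_X.subset

lemma isRelPrime_X_pow_sub_C {K : Type*} [Field K] (hij : i ≠ j) (hn : n ≠ 0) (a b : K) :
    IsRelPrime (X i ^ n - C a) (X j ^ n - C b) := by
  intro h hi hj
  have hvi := (vars_subset_of_dvd hi (X_pow_sub_C_ne_zero hn i a)).trans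
    (vars_X_pow_sub_C_subset n i a)
  have hvj := (vars_subset_of_dvd hj (X_pow_sub_C_ne_zero hn j b)).trans
    (vars_X_pow_sub_C_subset n j b)
  have hvars : h.vars = ∅ := Finset.subset_empty.1 fun k hk =>
    absurd ((Finset.mem_singleton.1 (hvi hk)).symm.trans (Finset.mem_singleton.1 (hvj hk))) hij
  rw [vars_eq_empty_iff_eq_C] at hvars
  rw [hvars]
  refine (IsUnit.mk0 _ fun h₀ => ?_).map C
  rw [h₀, C_0] at hvars
  exact X_pow_sub_C_ne_zero hn i a (zero_dvd_iff.1 (hvars ▸ hi))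

lemma exists_eq_C_mul_X_of_pow_eq [IsIntegrallyClosed (MvPolynomial σ R)] {p : MvPolynomial σ R}
    (hn : n ≠ 0) (h : p ^ n = X i ^ n) : ∃ ξ : Rˣ, p = C (ξ : R) * X i := by
  have hassoc : Associated (X i) p := associated_of_dvd_dvd
    ((IsIntegrallyClosed.pow_dvd_pow_iff hn).1 h.symm.dvd)
    ((IsIntegrallyClosed.pow_dvd_pow_iff hn).1 h.dvd)
  obtain ⟨u, rfl⟩ := hassoc
  obtain ⟨ξ, hξ, hu⟩ := MvPolynomial.isUnit_iff_eq_C_of_isReduced.1 u.isUnit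
  exact ⟨hξ.unit, by rw [hu, IsUnit.unit_spec, mul_comm]⟩

end Factorization

section Veronese

variable {K : Type*} [Field K] {n : ℕ}

/-- The generator `x ^ (n - i) * y ^ i` of the Veronese subalgebra. -/
noncomputable def veroneseGen (K : Type*) [Field K] {n i : ℕ} (hi : i ≤ n) : veronese K n :=
  ⟨X 0 ^ (n - i) * X 1 ^ i, Algebra.subset_adjoin ⟨i, hi, rfl⟩⟩

lemma coe_veroneseGen {i : ℕ} (hi : i ≤ n) :
    (veroneseGen K hi : MvPolynomial (Fin 2) K) = X 0 ^ (n - i) * X 1 ^ i :=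
  rfl

lemma veronese_algHom_ext {A : Type*} [Semiring A] [Algebra K A] {φ ψ : veronese K n →ₐ[K] A}
    (h : ∀ i (hi : i ≤ n), φ (veroneseGen K hi) = ψ (veroneseGen K hi)) : φ = ψ :=
  AlgHom.adjoin_ext <| by
    rintro _ ⟨i, hi, rfl⟩
    exact h i hi

lemma veroneseGen_mul_pow {i : ℕ} (hi : i ≤ n) (h1 : 1 ≤ n) :
    veroneseGen K hi * veroneseGen K n.zero_le ^ i =
      veroneseGen K n.zero_le * veroneseGen K h1 ^ i := by
  obtain ⟨k, rfl⟩ := Nat.exists_eq_add_of_le' h1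
  refine Subtype.ext ?_
  simp only [Subalgebra.coe_mul, Subalgebra.coe_pow, coe_veroneseGen, Nat.sub_zero,
    Nat.add_sub_cancel]
  linear_combination (X 0 ^ (k * i) * X 1 ^ i) *
    pow_sub_mul_pow (X 0 : MvPolynomial (Fin 2) K) hi

lemma exists_apply_veroneseGen_eq {A : Type*} [CommRing A] [IsDomain A] [Algebra K A]
    [UniqueFactorizationMonoid A] (f : veronese K n →ₐ[K] A)
    (h₀ : f (veroneseGen K n.zero_le) ≠ 0) :
    ∃ h P Q, ∀ i (hi : i ≤ n), f (veroneseGen K hi) = h * (P ^ (n - i) * Q ^ i) := by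
  let a (i : ℕ) : A := if hi : i ≤ n then f (veroneseGen K hi) else 0
  have ha {i : ℕ} (hi : i ≤ n) : a i = f (veroneseGen K hi) := dif_pos hi
  obtain ⟨h, P, Q, hPQ⟩ := exists_eq_mul_pow_mul_pow (A := a) (n := n) (by rwa [ha]) fun i hi => by
    rcases i.eq_zero_or_pos with rfl | hi0
    · simp
    · rw [ha hi, ha n.zero_le, ha (hi0.trans_le hi : 1 ≤ n), ← map_pow, ← map_mul,
        veroneseGen_mul_pow hi (hi0.trans_le hi), map_mul, map_pow]
  exact ⟨h, P, Q, fun i hi => ha hi ▸ hPQ i hi⟩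

lemma dvd_apply_sub_algebraMap_constantCoeff {A : Type*} [CommRing A] [Algebra K A]
    (hn : n ≠ 0) {f : veronese K n →ₐ[K] A} {h : A}
    (hf : ∀ i (hi : i ≤ n), h ∣ f (veroneseGen K hi)) (v : veronese K n) :
    h ∣ f v - algebraMap K A (constantCoeff (v : MvPolynomial (Fin 2) K)) := by
  have hext : (Ideal.Quotient.mkₐ K (Ideal.span {h})).comp f =
      (aeval (0 : Fin 2 → A ⧸ Ideal.span {h})).comp (veronese K n).val := by
    refine veronese_algHom_ext fun i hi => ?_
    have hzero : (0 : A ⧸ Ideal.span {h}) ^ (n - i) * 0 ^ i = 0 := by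
      rw [← pow_add, Nat.sub_add_cancel hi, zero_pow hn]
    simpa [coe_veroneseGen, hzero, Ideal.Quotient.eq_zero_iff_dvd] using hf i hi
  rw [← Ideal.mem_span_singleton, ← Ideal.Quotient.eq]
  simpa [aeval_zero] using DFunLike.congr_fun hext v

lemma exists_algHom_extending [IsAlgClosed K] (hn : n ≠ 0) (f : veronese K n ≃ₐ[K] veronese K n) :
    ∃ G : MvPolynomial (Fin 2) K →ₐ[K] MvPolynomial (Fin 2) K, ∀ v : veronese K n, G v = f v := by
  let f' : veronese K n →ₐ[K] MvPolynomial (Fin 2) K := (veronese K n).val.comp f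
  have h₀ : f' (veroneseGen K n.zero_le) ≠ 0 := by
    simp [f', ← Subtype.coe_inj, coe_veroneseGen]
  obtain ⟨h, P, Q, hPQ⟩ := exists_apply_veroneseGen_eq f' h₀
  have hunit : IsUnit h := by
    have hdvd := dvd_apply_sub_algebraMap_constantCoeff hn fun i hi => Dvd.intro _ (hPQ i hi).symm
    have hdvdX := hdvd (f.symm (veroneseGen K n.zero_le))
    have hdvdY := hdvd (f.symm (veroneseGen K le_rfl))
    simp only [f', AlgHom.comp_apply, AlgEquiv.coe_toAlgHom, AlgEquiv.apply_symm_apply,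
      Subalgebra.coe_val, coe_veroneseGen, Nat.sub_zero, Nat.sub_self, pow_zero, mul_one,
      one_mul, algebraMap_eq] at hdvdX hdvdY
    exact isRelPrime_X_pow_sub_C zero_ne_one hn _ _ hdvdX hdvdY
  obtain ⟨c, -, rfl⟩ := MvPolynomial.isUnit_iff_eq_C_of_isReduced.1 hunit
  obtain ⟨θ, rfl⟩ := IsAlgClosed.exists_pow_nat_eq c hn.bot_lt
  suffices hext : (aeval ![C θ * P, C θ * Q]).comp (veronese K n).val = f' from
    ⟨aeval ![C θ * P, C θ * Q], DFunLike.congr_fun hext⟩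
  refine veronese_algHom_ext fun i hi => ?_
  rw [hPQ, C_pow, ← pow_sub_mul_pow _ hi]
  simp only [AlgHom.comp_apply, Subalgebra.coe_val, coe_veroneseGen, map_mul, map_pow, aeval_X,
    Matrix.cons_val_zero, Matrix.cons_val_one]
  ring

lemma X_pow_mul_X_pow_mem_veronese (k : ℕ) {i j : ℕ} (hij : i + j = n * k) :
    (X 0 ^ i * X 1 ^ j : MvPolynomial (Fin 2) K) ∈ veronese K n := by
  induction k generalizing i j with
  | zero =>
    obtain ⟨rfl, rfl⟩ : i = 0 ∧ j = 0 := by lia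
    simp [one_mem]
  | succ k ih =>
    have hle : n ≤ i + j := hij ▸ Nat.le_mul_of_pos_right n k.succ_pos
    have hj : min n j ≤ n := min_le_left n j
    have hi : n - min n j ≤ i := by lia
    have hsplit : (X 0 ^ i * X 1 ^ j : MvPolynomial (Fin 2) K) =
        X 0 ^ (i - (n - min n j)) * X 1 ^ (j - min n j) *
          (veroneseGen K hj : MvPolynomial (Fin 2) K) := by
      rw [← pow_sub_mul_pow _ hi, ← pow_sub_mul_pow _ (min_le_right n j), coe_veroneseGen]
      ring
    rw [hsplit]
    exact mul_mem (ih (by rw [mul_add] at hij; lia)) (veroneseGen K hj).2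

lemma mem_veronese_iff_scaling {ζ : Kˣ} (hζ : IsPrimitiveRoot ζ n) (p : MvPolynomial (Fin 2) K) :
    p ∈ veronese K n ↔ scaling ζ p = p := by
  constructor
  · intro hp
    have hext : (scaling ζ).toAlgHom.comp (veronese K n).val =
        (veronese K n).val := veronese_algHom_ext fun i hi => by
      have hone : (C (ζ : K) : MvPolynomial (Fin 2) K) ^ (n - i) * C (ζ : K) ^ i = 1 := by
        rw [← pow_add, Nat.sub_add_cancel hi, ← C_pow, ← Units.val_pow_eq_pow_val, hζ.pow_eq_one,
          Units.val_one, C_1]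
      simp only [AlgHom.comp_apply, Subalgebra.coe_val, coe_veroneseGen, map_mul, map_pow,
        AlgEquiv.coe_toAlgHom, scaling_X]
      linear_combination (X 0 ^ (n - i) * X 1 ^ i) * hone
    simpa only [AlgHom.comp_apply, Subalgebra.coe_val, AlgEquiv.coe_toAlgHom] using
      DFunLike.congr_fun hext ⟨p, hp⟩
  · intro h
    rw [p.as_sum]
    refine sum_mem fun d hd => ?_
    have hcoeff := congrArg (coeff d) h
    rw [coeff_scaling, mul_eq_right₀ (mem_support_iff.1 hd)] at hcoeff
    obtain ⟨k, hk⟩ := hζ.dvd_of_pow_eq_one d.degree (Units.ext (by simpa using hcoeff))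
    rw [monomial_eq, Finsupp.prod_fintype _ _ (by simp), Fin.prod_univ_two, C_mul']
    refine Subalgebra.smul_mem _ (X_pow_mul_X_pow_mem_veronese k ?_) _
    simpa [Finsupp.degree_eq_sum] using hk

lemma exists_eq_scaling_of_fixes_veronese (hn : n ≠ 0)
    {Φ : MvPolynomial (Fin 2) K →ₐ[K] MvPolynomial (Fin 2) K}
    (hΦ : ∀ p ∈ veronese K n, Φ p = p) :
    ∃ ξ : Kˣ, ξ ^ n = 1 ∧ Φ = (scaling ξ : MvPolynomial (Fin 2) K ≃ₐ[K] _) := by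
  have hfix {i : ℕ} (hi : i ≤ n) : Φ (X 0) ^ (n - i) * Φ (X 1) ^ i = X 0 ^ (n - i) * X 1 ^ i := by
    simpa [coe_veroneseGen] using hΦ _ (veroneseGen K hi).2
  obtain ⟨ξ, hξ⟩ := exists_eq_C_mul_X_of_pow_eq hn (by simpa using hfix n.zero_le)
  obtain ⟨η, hη⟩ := exists_eq_C_mul_X_of_pow_eq hn (by simpa using hfix le_rfl)
  have hunits {i : ℕ} (hi : i ≤ n) : ξ ^ (n - i) * η ^ i = 1 := by
    have h := hfix hi
    rw [hξ, hη, mul_pow, mul_pow, mul_mul_mul_comm,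
      mul_eq_right₀ (by simp [X_ne_zero])] at h
    exact Units.ext (C_injective _ _ (by simpa using h))
  have hξn : ξ ^ n = 1 := by simpa using hunits n.zero_le
  have hξη : ξ = η := by
    have h1 : 1 ≤ n := Nat.one_le_iff_ne_zero.2 hn
    refine mul_left_cancel (a := ξ ^ (n - 1)) ?_
    rw [← pow_one η, hunits h1, ← pow_succ, Nat.sub_add_cancel h1, hξn]
  refine ⟨ξ, hξn, algHom_ext fun i => ?_⟩
  fin_cases i
  · simpa [scaling_X] using hξ
  · simpa [scaling_X, hξη] using hη

lemma exists_algEquiv_extending [IsAlgClosed K] (hn : n ≠ 0)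
    (f : veronese K n ≃ₐ[K] veronese K n) :
    ∃ F : MvPolynomial (Fin 2) K ≃ₐ[K] MvPolynomial (Fin 2) K,
      ∀ v : veronese K n, F v = f v := by
  obtain ⟨G, hG⟩ := exists_algHom_extending hn f
  obtain ⟨H, hH⟩ := exists_algHom_extending hn f.symm
  obtain ⟨ξ, -, hξ⟩ := exists_eq_scaling_of_fixes_veronese hn (Φ := G.comp H) fun p hp => by
    simpa [hG] using congrArg G (hH ⟨p, hp⟩)
  obtain ⟨η, -, hη⟩ := exists_eq_scaling_of_fixes_veronese hn (Φ := H.comp G) fun p hp => by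
    simpa [hH] using congrArg H (hG ⟨p, hp⟩)
  have hsurj : Function.Surjective (G ∘ H) := by
    rw [← AlgHom.coe_comp, hξ]
    exact (scaling ξ).surjective
  have hinj : Function.Injective (H ∘ G) := by
    rw [← AlgHom.coe_comp, hη]
    exact (scaling η).injective
  exact ⟨.ofBijective G ⟨hinj.of_comp, hsurj.of_comp⟩, hG⟩

lemma symm_apply_coe_of_extends {F : MvPolynomial (Fin 2) K ≃ₐ[K] MvPolynomial (Fin 2) K}
    {f : veronese K n ≃ₐ[K] veronese K n} (hF : ∀ v : veronese K n, F v = f v)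
    (v : veronese K n) : F.symm v = f.symm v := by
  rw [AlgEquiv.symm_apply_eq, hF, AlgEquiv.apply_symm_apply]

lemma pow_apply_coe_of_extends {F : MvPolynomial (Fin 2) K ≃ₐ[K] MvPolynomial (Fin 2) K}
    {f : veronese K n ≃ₐ[K] veronese K n} (hF : ∀ v : veronese K n, F v = f v) (m : ℕ)
    (v : veronese K n) : (F ^ m) v = (f ^ m) v := by
  induction m with
  | zero => simp
  | succ m ih => rw [pow_succ', AlgEquiv.mul_apply, ih, hF, pow_succ', AlgEquiv.mul_apply]

lemma commute_scaling_of_extends {ζ : Kˣ} (hn : n ≠ 0) (hζ : IsPrimitiveRoot ζ n)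
    {F : MvPolynomial (Fin 2) K ≃ₐ[K] MvPolynomial (Fin 2) K}
    {f : veronese K n ≃ₐ[K] veronese K n} (hF : ∀ v : veronese K n, F v = f v) :
    Commute (scaling ζ) F := by
  obtain ⟨ξ, -, hξ⟩ := exists_eq_scaling_of_fixes_veronese hn
    (Φ := (F * scaling ζ * F⁻¹).toAlgHom) fun p hp => by
      have hmem : F.symm p ∈ veronese K n := by
        rw [symm_apply_coe_of_extends hF ⟨p, hp⟩]
        exact (f.symm ⟨p, hp⟩).2
      change F (scaling ζ (F.symm p)) = p
      rw [(mem_veronese_iff_scaling hζ _).1 hmem, AlgEquiv.apply_symm_apply]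
  have hsemi : SemiconjBy F (scaling ζ) (scaling ξ) :=
    mul_inv_eq_iff_eq_mul.1 (AlgEquiv.coe_toAlgHom_injective hξ)
  rw [← eq_of_semiconjBy_scaling hsemi] at hsemi
  exact hsemi.symm

lemma isOfFinOrder_of_extends (hn : n ≠ 0)
    {F : MvPolynomial (Fin 2) K ≃ₐ[K] MvPolynomial (Fin 2) K}
    {f : veronese K n ≃ₐ[K] veronese K n} (hF : ∀ v : veronese K n, F v = f v)
    (hf : IsOfFinOrder f) : IsOfFinOrder F := by
  obtain ⟨m, hm, hfm⟩ := isOfFinOrder_iff_pow_eq_one.1 hf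
  obtain ⟨ξ, hξn, hξ⟩ := exists_eq_scaling_of_fixes_veronese hn
    (Φ := (F ^ m).toAlgHom) fun p hp => by
      simpa [hfm] using pow_apply_coe_of_extends hF m ⟨p, hp⟩
  refine IsOfFinOrder.of_pow ?_ hm.ne'
  rw [AlgEquiv.coe_toAlgHom_injective hξ]
  exact scaling.isOfFinOrder (isOfFinOrder_iff_pow_eq_one.2 ⟨n, hn.bot_lt, hξn⟩)

lemma exists_algEquiv_restricting {ζ : Kˣ} (hζ : IsPrimitiveRoot ζ n)
    {G : MvPolynomial (Fin 2) K ≃ₐ[K] MvPolynomial (Fin 2) K} (hG : Commute (scaling ζ) G) :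
    ∃ g : veronese K n ≃ₐ[K] veronese K n,
      ∀ v : veronese K n, (g v : MvPolynomial (Fin 2) K) = G v := by
  have hcomm (p : MvPolynomial (Fin 2) K) : scaling ζ (G p) = G (scaling ζ p) :=
    DFunLike.congr_fun hG.eq p
  have hmap : (veronese K n).map G.toAlgHom = veronese K n := by
    ext p
    obtain ⟨q, rfl⟩ := G.surjective p
    rw [mem_veronese_iff_scaling hζ (G q), hcomm, G.injective.eq_iff, ← mem_veronese_iff_scaling hζ]
    exact G.injective.mem_set_image
  exact ⟨(G.subalgebraMap _).trans (Subalgebra.equivOfEq _ _ hmap), fun _ => rfl⟩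

end Veronese

set_option synthInstance.maxHeartbeats 1000000 in
set_option maxHeartbeats 1000000 in
/-- Every automorphism of `K[xⁿ, …, yⁿ]` of finite order is linearizable:
it is conjugate to the restriction of a linear automorphism of `K[x,y]`. -/
theorem finite_order_automorphism_linearizable (K : Type*) [Field K] [CharZero K]
    [IsAlgClosed K] (n : ℕ) (hn : 2 ≤ n)
    (f : veronese K n ≃ₐ[K] veronese K n) (m : ℕ) (hm : 1 ≤ m) (hf : f ^ m = 1) :
    ∃ φ : veronese K n ≃ₐ[K] veronese K n,
      ∃ L : MvPolynomial (Fin 2) K ≃ₐ[K] MvPolynomial (Fin 2) K, IsLinearAut K L ∧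
        ∀ a : veronese K n,
          (φ.symm (f (φ a)) : MvPolynomial (Fin 2) K) = L (a : MvPolynomial (Fin 2) K) := by
  have hn0 : n ≠ 0 := by lia
  have : NeZero n := ⟨hn0⟩
  obtain ⟨ζ, hζ⟩ := HasEnoughRootsOfUnity.exists_primitiveRoot K n
  lift ζ to Kˣ using hζ.isUnit hn0
  rw [IsPrimitiveRoot.coe_units_iff] at hζ
  obtain ⟨F, hF⟩ := exists_algEquiv_extending hn0 f
  obtain ⟨G, hG, hlinear⟩ := exists_conj_isLinearAut (hζ.ne_one hn)
    (commute_scaling_of_extends hn0 hζ hF)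
    (isOfFinOrder_of_extends hn0 hF (isOfFinOrder_iff_pow_eq_one.2 ⟨m, hm, hf⟩))
  obtain ⟨g, hg⟩ := exists_algEquiv_restricting hζ hG
  refine ⟨g.symm, G * F * G⁻¹, hlinear, fun a => ?_⟩
  change (g (f (g.symm a)) : MvPolynomial (Fin 2) K) = G (F (G.symm a))
  rw [symm_apply_coe_of_extends (fun v => (hg v).symm), hF, hg]
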